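/- Let K be a field, D a K-linear idempotent complete triangulated category with a split-generator, 𝔟 a bounded co-t-structure on D with finite co-heart, and Φ : D → D an exact endofunctor with Φ^N ≇ 0 for all N > 0. Then for every t ∈ ℝ and every split-generator G of D, the limit lim_{N→∞} (1/N) log δ̌_t^𝔟(Φ^N(G)) exists and h_t(Φ) = ȟ_t^𝔟(Φ) = lim_{N→∞} (1/N) log δ̌_t^𝔟(Φ^N(G)); in particular ȟ_t^𝔟(Φ) does not depend on the choice of 𝔟. -/

import Mathlib

/-!
A bounded co-t-structure gives each object a range of weights, the objects of weight `k` being the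
`k`-fold shifts of co-heart objects. Such a pure object with `s` indecomposable summands is assigned
the cost `s * exp (k * t)`. An object is *built* at cost `c` if it arises from pure objects by
iterated extensions, in any order, with total cost at most `c` (`Built`).

Weight truncations of a built object distribute its pure pieces (`Built.trunc`), since the relevant
connecting maps between the truncations extend by orthogonality. Hence a built object, and even a
retract of one, has a filtration with factors ordered by weight (`Tow`) in which every single factor
costs at most a constant times `c` (`RBuilt.tow`). For `t ≥ 0` one splits off top weights; for
`t ≤ 0` one splits off bottom weights and then reverses the order of the filtration. So the
co-t-complexity of an object agrees with the cost of building it, up to a factor given by the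
number of its weights.

Let `B N` (`growth`) be the infimum of the costs at which `Φ ^ N` of all indecomposables of the
co-heart can be built. Substituting constructions into each other gives `B (M + N) ≤ B M * B N`.
As there are finitely many indecomposables, `Φ` moves weights by a bounded amount, so the weights
of `Φ ^ N E` lie in an interval of length `O(N)`; as `Φ ^ N` does not vanish, this also bounds
`B N` from below by an exponential in `-N`. By Fekete's lemma `log (B N) / N` has a finite limit `L`
(`exists_growth_limit`).

Finally all quantities in question agree with `B N` up to polynomial factors in `N`.
* `coComplexity_iter_le`: the co-t-complexity of `Φ ^ N E` is at most a constant times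
  `(1 + N) * B N`, for every `E`.
* `growth_le_coComplexity`: for a split-generator `G` the converse estimate holds for `Φ ^ N G`,
  because every indecomposable is a retract of an object filtered by shifts of `G`.
* `coComplexity_le_complexity`, `exists_complexity_le`: the complexity with respect to `G` is
  comparable to the co-t-complexity, the summands of the factors of a filtration being replaced by
  objects filtered by shifts of `G`.

The octahedral axiom is not among the hypotheses, so filtrations cannot be refined by composing
triangles. Where this would be needed the arguments pass to retracts: if `A ⟶ B` factors through
an object `Z` such that `A ⟶ Z` kills the connecting map of `A ⟶ B ⟶ W`, then `B` is a retract of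
`Z ⊞ W` (`Tri.retract_of_factor`), and `Z` is obtained by killing cells one at a time.
-/

/- Common definitions: filtrations, categorical complexity and entropy,
(co-)t-structures, hearts/co-hearts, and associated entropy-type invariants. -/

open CategoryTheory CategoryTheory.Limits CategoryTheory.Pretriangulated Filter
open scoped ENNReal

universe w v u

namespace CatEnt

/-- Iterates of an endofunctor. -/
def iter {C : Type u} [Category.{v} C] (Φ : C ⥤ C) : ℕ → C ⥤ C
  | 0 => 𝟭 C
  | (n + 1) => iter Φ n ⋙ Φ

variable (C : Type u) [Category.{v} C] [Preadditive C] [HasZeroObject C]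
  [HasShift C ℤ] [∀ n : ℤ, (shiftFunctor C n).Additive] [Pretriangulated C]
  [HasFiniteBiproducts C]

/-- A filtration `0 = A 0 → A 1 → ⋯ → A m ≅ F` whose successive cones (factors)
are the objects `X i`, and all of whose objects lie in the class `S`. -/
def HasFiltrationIn (S : Set C) (F : C) {m : ℕ} (X : Fin m → C) : Prop :=
  ∃ A : Fin (m + 1) → C, IsZero (A 0) ∧ Nonempty (A (Fin.last m) ≅ F) ∧
    (∀ i, A i ∈ S) ∧
    ∀ i : Fin m, ∃ (f : A i.castSucc ⟶ A i.succ) (g : A i.succ ⟶ X i)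
      (h : X i ⟶ (A i.castSucc)⟦(1 : ℤ)⟧), Triangle.mk f g h ∈ distTriang C

/-- The categorical complexity `δ_t(E, F)` computed inside the class `S`:
the infimum of `∑ exp (k i * t)` over all filtrations of objects `F ⊞ F'`
(`F' ∈ S`) with factors the shifts `E⟦k i⟧`. -/
noncomputable def complexityIn (S : Set C) (t : ℝ) (E F : C) : ℝ≥0∞ :=
  sInf { c | ∃ (m : ℕ) (k : Fin m → ℤ) (F' : C), F' ∈ S ∧
    HasFiltrationIn C S (F ⊞ F') (fun i => E⟦k i⟧) ∧
    c = ENNReal.ofReal (∑ i, Real.exp ((k i : ℝ) * t)) }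

/-- The categorical complexity `δ_t(E,F)` of Dimitrov–Haiden–Katzarkov–Kontsevich. -/
noncomputable def complexity (t : ℝ) (E F : C) : ℝ≥0∞ :=
  complexityIn C Set.univ t E F

/-- `G` is a split-generator of the (triangulated sub)category determined by `S`. -/
def IsSplitGeneratorIn (S : Set C) (G : C) : Prop :=
  G ∈ S ∧ ∀ X ∈ S, ∃ (m : ℕ) (k : Fin m → ℤ) (F' : C), F' ∈ S ∧
    HasFiltrationIn C S (X ⊞ F') (fun i => G⟦k i⟧)

/-- `G` is a split-generator of `C`. -/
def IsSplitGenerator (G : C) : Prop := IsSplitGeneratorIn C Set.univ G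

/-- The sequence `N ↦ (1/N) log (f N)`, with values in the extended reals. -/
noncomputable def entSeq (f : ℕ → ℝ≥0∞) (N : ℕ) : EReal :=
  (((N : ℝ)⁻¹ : ℝ) : EReal) * ENNReal.log (f N)

/-- The categorical entropy of `Φ` restricted to `S`, computed with the
split-generator `G`: `limsup_N (1/N) log δ_t(G, Φ^N G)`. -/
noncomputable def entropyIn (S : Set C) (Φ : C ⥤ C) (G : C) (t : ℝ) : EReal :=
  Filter.limsup
    (entSeq (fun N => complexityIn C S t G ((iter Φ N).obj G))) Filter.atTop

/-- The categorical entropy `h_t(Φ)`, computed with the split-generator `G`. -/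
noncomputable def entropy (Φ : C ⥤ C) (G : C) (t : ℝ) : EReal :=
  entropyIn C Set.univ Φ G t

/-- `Φ^N` is not isomorphic to `0` on `S`, for all `N > 0`. -/
def PowersNonzeroOn (S : Set C) (Φ : C ⥤ C) : Prop :=
  ∀ N : ℕ, 0 < N → ∃ X ∈ S, ¬ IsZero ((iter Φ N).obj X)

/-- `Φ` maps the class `S` into itself. -/
def Preserves (S : Set C) (Φ : C ⥤ C) : Prop := ∀ X ∈ S, Φ.obj X ∈ S

section TStructure

/-- `(le, ge)` is a t-structure on the full triangulated subcategory of `C`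
determined by `S` (take `S = Set.univ` for a t-structure on `C`). -/
structure IsTStructureIn (S le ge : Set C) : Prop where
  le_sub : le ⊆ S
  ge_sub : ge ⊆ S
  le_iso : ∀ ⦃X Y : C⦄, (X ≅ Y) → X ∈ le → Y ∈ le
  ge_iso : ∀ ⦃X Y : C⦄, (X ≅ Y) → X ∈ ge → Y ∈ ge
  shift_le : ∀ X ∈ le, X⟦(1 : ℤ)⟧ ∈ le
  shift_ge : ∀ X ∈ ge, X⟦(-1 : ℤ)⟧ ∈ ge
  hom_zero : ∀ X ∈ le, ∀ Y : C, Y⟦(1 : ℤ)⟧ ∈ ge → ∀ f : X ⟶ Y, f = 0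
  exists_triangle : ∀ E ∈ S, ∃ (D' F' : C), D' ∈ le ∧ F'⟦(1 : ℤ)⟧ ∈ ge ∧
    ∃ (f : D' ⟶ E) (g : E ⟶ F') (h : F' ⟶ D'⟦(1 : ℤ)⟧),
      Triangle.mk f g h ∈ distTriang C

/-- Boundedness of a (co-)t-structure `(P, Q)` on the subcategory determined
by `S` : every object of `S` lies in some shift of `P` and in some shift of `Q`. -/
def IsBoundedIn (S P Q : Set C) : Prop :=
  ∀ E ∈ S, (∃ k : ℤ, E⟦k⟧ ∈ P) ∧ (∃ k : ℤ, E⟦k⟧ ∈ Q)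

/-- The heart of a t-structure. -/
def heart (le ge : Set C) : Set C := le ∩ ge

/-- `X` is a simple object of the heart `H` : it is a nonzero object of `H`
and in every extension `A → X → B` with `A, B ∈ H`, `A` or `B` vanishes. -/
def SimpleIn (H : Set C) (X : C) : Prop :=
  X ∈ H ∧ ¬ IsZero X ∧ ∀ A B : C, A ∈ H → B ∈ H →
    (∃ (f : A ⟶ X) (g : X ⟶ B) (h : B ⟶ A⟦(1 : ℤ)⟧),
      Triangle.mk f g h ∈ distTriang C) →
    IsZero A ∨ IsZero B

/-- `X` (an object of the heart `H`) has length `n`, i.e. admits a composition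
series with `n` simple factors. -/
def HasLengthIn (H : Set C) (X : C) (n : ℕ) : Prop :=
  ∃ S : Fin n → C, (∀ i, SimpleIn C H (S i)) ∧ HasFiltrationIn C Set.univ X S

/-- The heart `H` is finite : it is a length category having only finitely
many isomorphism classes of simple objects. -/
def FiniteHeart (H : Set C) : Prop :=
  (∀ X ∈ H, ∃ n : ℕ, HasLengthIn C H X n) ∧
  ∃ (n : ℕ) (S : Fin n → C), (∀ i, SimpleIn C H (S i)) ∧
    (∀ i j, i ≠ j → IsEmpty (S i ≅ S j)) ∧
    ∀ T, SimpleIn C H T → ∃ i, Nonempty (T ≅ S i)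

/-- The invariant `δ̂_t` associated with a bounded t-structure with finite
heart `H` : the value `∑ λ(E i) * exp (k i * t)` on the (essentially unique)
t-filtration of `E`, with factors `(X i)⟦k i⟧`, `X i ∈ H`, `k` strictly
decreasing (encoded as an infimum over all such filtrations). -/
noncomputable def tComplexity (H : Set C) (t : ℝ) (E : C) : ℝ≥0∞ :=
  sInf { c | ∃ (m : ℕ) (k : Fin m → ℤ) (X : Fin m → C) (lam : Fin m → ℕ),
    StrictAnti k ∧ (∀ i, X i ∈ H) ∧ (∀ i, HasLengthIn C H (X i) (lam i)) ∧
    HasFiltrationIn C Set.univ E (fun i => (X i)⟦k i⟧) ∧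
    c = ENNReal.ofReal (∑ i, (lam i : ℝ) * Real.exp ((k i : ℝ) * t)) }

/-- The entropy-type invariant `ĥ_t` associated with a bounded t-structure with
finite heart `H`, for the subcategory determined by `S` :
`sup_{E ∈ S} limsup_N (1/N) log δ̂_t(Φ^N E)`. -/
noncomputable def tEntropyIn (S H : Set C) (Φ : C ⥤ C) (t : ℝ) : EReal :=
  ⨆ E : {X : C // X ∈ S},
    Filter.limsup
      (entSeq (fun N => tComplexity C H t ((iter Φ N).obj E.1))) Filter.atTop

end TStructure

section CoTStructure

/-- `(ge, le)` is a co-t-structure on the full triangulated subcategory of `C`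
determined by `S` (take `S = Set.univ` for a co-t-structure on `C`). -/
structure IsCoTStructureIn (S ge le : Set C) : Prop where
  ge_sub : ge ⊆ S
  le_sub : le ⊆ S
  ge_iso : ∀ ⦃X Y : C⦄, (X ≅ Y) → X ∈ ge → Y ∈ ge
  le_iso : ∀ ⦃X Y : C⦄, (X ≅ Y) → X ∈ le → Y ∈ le
  ge_summand : ∀ X Y : C, (X ⊞ Y) ∈ ge → X ∈ ge
  le_summand : ∀ X Y : C, (X ⊞ Y) ∈ le → X ∈ le
  shift_ge : ∀ X ∈ ge, X⟦(-1 : ℤ)⟧ ∈ ge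
  shift_le : ∀ X ∈ le, X⟦(1 : ℤ)⟧ ∈ le
  hom_zero : ∀ X : C, X⟦(1 : ℤ)⟧ ∈ ge → ∀ Y ∈ le, ∀ f : X ⟶ Y, f = 0
  exists_triangle : ∀ E ∈ S, ∃ (D' F' : C), D'⟦(1 : ℤ)⟧ ∈ ge ∧ F' ∈ le ∧
    ∃ (f : D' ⟶ E) (g : E ⟶ F') (h : F' ⟶ D'⟦(1 : ℤ)⟧),
      Triangle.mk f g h ∈ distTriang C

/-- The co-heart of a co-t-structure. -/
def coheart (ge le : Set C) : Set C := ge ∩ le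

/-- `X` is an indecomposable object of the co-heart `H`. -/
def IndecIn (H : Set C) (X : C) : Prop :=
  X ∈ H ∧ ¬ IsZero X ∧ ∀ A B : C, Nonempty (X ≅ A ⊞ B) → IsZero A ∨ IsZero B

/-- `X` (an object of the co-heart `H`) is a direct sum of `n` indecomposable
objects, i.e. `σ(X) = n`. -/
def HasSummandCountIn (H : Set C) (X : C) (n : ℕ) : Prop :=
  ∃ M : Fin n → C, (∀ i, IndecIn C H (M i)) ∧ Nonempty (X ≅ ⨁ M)

/-- The co-heart `H` is finite : it is a Krull–Schmidt category (decompositions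
into indecomposables exist and are essentially unique) having only finitely many
isomorphism classes of indecomposable objects. -/
def FiniteCoheart (H : Set C) : Prop :=
  (∀ X ∈ H, ∃ n : ℕ, HasSummandCountIn C H X n) ∧
  (∀ X ∈ H, ∀ (n m : ℕ) (M : Fin n → C) (N : Fin m → C),
    (∀ i, IndecIn C H (M i)) → (∀ j, IndecIn C H (N j)) →
    Nonempty (X ≅ ⨁ M) → Nonempty (X ≅ ⨁ N) →
    ∃ e : Fin n ≃ Fin m, ∀ i, Nonempty (M i ≅ N (e i))) ∧
  ∃ (n : ℕ) (M : Fin n → C), (∀ i, IndecIn C H (M i)) ∧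
    (∀ i j, i ≠ j → IsEmpty (M i ≅ M j)) ∧
    ∀ T, IndecIn C H T → ∃ i, Nonempty (T ≅ M i)

/-- The invariant `δ̌_t` associated with a bounded co-t-structure with finite
co-heart `H` : the infimum, over all co-t-filtrations of `E` (filtrations with
factors `(X i)⟦k i⟧`, `X i ∈ H`, `k` strictly increasing), of
`∑ σ(X i) * exp (k i * t)`. -/
noncomputable def coComplexity (H : Set C) (t : ℝ) (E : C) : ℝ≥0∞ :=
  sInf { c | ∃ (m : ℕ) (k : Fin m → ℤ) (X : Fin m → C) (s : Fin m → ℕ),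
    StrictMono k ∧ (∀ i, X i ∈ H) ∧ (∀ i, HasSummandCountIn C H (X i) (s i)) ∧
    HasFiltrationIn C Set.univ E (fun i => (X i)⟦k i⟧) ∧
    c = ENNReal.ofReal (∑ i, (s i : ℝ) * Real.exp ((k i : ℝ) * t)) }

/-- The entropy-type invariant `ȟ_t` associated with a bounded co-t-structure
with finite co-heart `H`, for the subcategory determined by `S`. -/
noncomputable def coEntropyIn (S H : Set C) (Φ : C ⥤ C) (t : ℝ) : EReal :=
  ⨆ E : {X : C // X ∈ S},
    Filter.limsup
      (entSeq (fun N => coComplexity C H t ((iter Φ N).obj E.1))) Filter.atTop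

end CoTStructure

end CatEnt

open CatEnt

set_option linter.unusedSectionVars false

namespace CatEnt

section Triangles

variable {C : Type u} [Category.{v} C] [Preadditive C] [HasZeroObject C]
  [HasShift C ℤ] [∀ n : ℤ, (shiftFunctor C n).Additive] [Pretriangulated C]

/-- The triangle `A ⟶ B ⟶ X ⟶ A⟦1⟧` with the given maps is distinguished. -/
def Tri {A B X : C} (f : A ⟶ B) (g : B ⟶ X) (h : X ⟶ A⟦(1 : ℤ)⟧) : Prop :=
  Triangle.mk f g h ∈ distTriang C

/-- `A`, `B`, `X` are the vertices of some distinguished triangle `A ⟶ B ⟶ X ⟶ A⟦1⟧`. -/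
def DTri (A B X : C) : Prop :=
  ∃ (f : A ⟶ B) (g : B ⟶ X) (h : X ⟶ A⟦(1 : ℤ)⟧), Tri f g h

theorem Tri.dtri {A B X : C} {f : A ⟶ B} {g : B ⟶ X} {h : X ⟶ A⟦(1 : ℤ)⟧}
    (T : Tri f g h) : DTri A B X := ⟨f, g, h, T⟩

section Fac

variable {A B X : C} {f : A ⟶ B} {g : B ⟶ X} {h : X ⟶ A⟦(1 : ℤ)⟧}

theorem Tri.z12 (T : Tri f g h) : f ≫ g = 0 := comp_distTriang_mor_zero₁₂ _ T

theorem Tri.z23 (T : Tri f g h) : g ≫ h = 0 := comp_distTriang_mor_zero₂₃ _ T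

theorem Tri.z31 (T : Tri f g h) : h ≫ f⟦(1 : ℤ)⟧' = 0 := comp_distTriang_mor_zero₃₁ _ T

theorem Tri.fac1 (T : Tri f g h) {Y : C} (x : Y ⟶ B) (hx : x ≫ g = 0) :
    ∃ y : Y ⟶ A, x = y ≫ f := Triangle.coyoneda_exact₂ _ T x hx

theorem Tri.fac2 (T : Tri f g h) {Y : C} (x : B ⟶ Y) (hx : f ≫ x = 0) :
    ∃ y : X ⟶ Y, x = g ≫ y := Triangle.yoneda_exact₂ _ T x hx

theorem Tri.fac3 (T : Tri f g h) {Y : C} (x : Y ⟶ X) (hx : x ≫ h = 0) :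
    ∃ y : Y ⟶ B, x = y ≫ g := Triangle.coyoneda_exact₃ _ T x hx

theorem Tri.fac4 (T : Tri f g h) {Y : C} (x : X ⟶ Y) (hx : g ≫ x = 0) :
    ∃ y : A⟦(1 : ℤ)⟧ ⟶ Y, x = h ≫ y := Triangle.yoneda_exact₃ _ T x hx

theorem Tri.fac5 (T : Tri f g h) {Y : C} (x : Y ⟶ A⟦(1 : ℤ)⟧) (hx : x ≫ f⟦(1 : ℤ)⟧' = 0) :
    ∃ y : Y ⟶ X, x = y ≫ h := Triangle.coyoneda_exact₁ _ T x hx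

theorem Tri.fac6 (T : Tri f g h) {Y : C} (x : A ⟶ Y) (hx : h ≫ x⟦(1 : ℤ)⟧' = 0) :
    ∃ y : B ⟶ Y, x = f ≫ y := by
  obtain ⟨y', hy'⟩ : ∃ y' : B⟦(1 : ℤ)⟧ ⟶ Y⟦(1 : ℤ)⟧, x⟦(1 : ℤ)⟧' = (-f⟦(1 : ℤ)⟧') ≫ y' :=
    Triangle.yoneda_exact₃ _ (rot_of_distTriang _ T) (x⟦(1 : ℤ)⟧') hx
  obtain ⟨y, rfl⟩ := (shiftFunctor C (1 : ℤ)).map_surjective y'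
  refine ⟨-y, (shiftFunctor C (1 : ℤ)).map_injective ?_⟩
  rw [hy']
  simp

theorem Tri.fac7 (T : Tri f g h) {Y : C} (x : Y ⟶ A) (hx : x ≫ f = 0) :
    ∃ y : Y⟦(1 : ℤ)⟧ ⟶ X, x⟦(1 : ℤ)⟧' = y ≫ h :=
  T.fac5 _ (by rw [← Functor.map_comp, hx, Functor.map_zero])

theorem Tri.rot (T : Tri f g h) : Tri g h (-f⟦(1 : ℤ)⟧') := rot_of_distTriang _ T

/-- The rotation of a triangle to the left; the sign can be moved to the last map. -/
theorem Tri.exists_inv_rot (T : Tri f g h) :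
    ∃ (k : X⟦(-1 : ℤ)⟧ ⟶ A) (l : B ⟶ X⟦(-1 : ℤ)⟧⟦(1 : ℤ)⟧), Tri k f l :=
  ⟨_, _, inv_rot_of_distTriang _ T⟩

theorem Tri.iso {A' B' X' : C} (T : Tri f g h) (a : A ≅ A') (b : B ≅ B') (x : X ≅ X') :
    Tri (a.inv ≫ f ≫ b.hom) (b.inv ≫ g ≫ x.hom) (x.inv ≫ h ≫ a.hom⟦(1 : ℤ)⟧') := by
  have h1 : (a.inv ≫ f ≫ b.hom) ≫ b.inv = a.inv ≫ f := by simp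
  have h2 : (b.inv ≫ g ≫ x.hom) ≫ x.inv = b.inv ≫ g := by simp
  have h3 : (x.inv ≫ h ≫ a.hom⟦(1 : ℤ)⟧') ≫ a.inv⟦(1 : ℤ)⟧' = x.inv ≫ h := by
    simp only [Category.assoc, ← Functor.map_comp, Iso.hom_inv_id, CategoryTheory.Functor.map_id,
      Category.comp_id]
  exact isomorphic_distinguished _ T _ (Triangle.isoMk _ _ a.symm b.symm x.symm h1 h2 h3)

end Fac

theorem DTri.iso {A B X A' B' X' : C} (T : DTri A B X) (a : A ≅ A') (b : B ≅ B') (x : X ≅ X') :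
    DTri A' B' X' := by
  obtain ⟨f, g, h, T⟩ := T
  exact (T.iso a b x).dtri

theorem DTri.shift {A B X : C} (T : DTri A B X) (n : ℤ) : DTri (A⟦n⟧) (B⟦n⟧) (X⟦n⟧) := by
  obtain ⟨f, g, h, T⟩ := T
  exact ⟨_, _, _, Triangle.shift_distinguished _ T n⟩

theorem DTri.rot {A B X : C} (T : DTri A B X) : DTri B X (A⟦(1 : ℤ)⟧) := by
  obtain ⟨f, g, h, T⟩ := T
  exact T.rot.dtri

theorem DTri.inv_rot {A B X : C} (T : DTri A B X) : DTri (X⟦(-1 : ℤ)⟧) A B := by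
  obtain ⟨f, g, h, T⟩ := T
  obtain ⟨k, l, T'⟩ := T.exists_inv_rot
  exact T'.dtri

theorem exists_cone {A B : C} (f : A ⟶ B) :
    ∃ (X : C) (g : B ⟶ X) (h : X ⟶ A⟦(1 : ℤ)⟧), Tri f g h := distinguished_cocone_triangle f

theorem exists_cocone {B X : C} (g : B ⟶ X) :
    ∃ (A : C) (f : A ⟶ B) (h : X ⟶ A⟦(1 : ℤ)⟧), Tri f g h := distinguished_cocone_triangle₁ g

theorem exists_mid {A X : C} (h : X ⟶ A⟦(1 : ℤ)⟧) :
    ∃ (B : C) (f : A ⟶ B) (g : B ⟶ X), Tri f g h := distinguished_cocone_triangle₂ h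

section TR3

variable {A B X A' B' X' : C} {f : A ⟶ B} {g : B ⟶ X} {h : X ⟶ A⟦(1 : ℤ)⟧}
  {f' : A' ⟶ B'} {g' : B' ⟶ X'} {h' : X' ⟶ A'⟦(1 : ℤ)⟧}

theorem Tri.complete1 (T : Tri f g h) (T' : Tri f' g' h') (b : B ⟶ B') (x : X ⟶ X')
    (hc : g ≫ x = b ≫ g') : ∃ a : A ⟶ A', f ≫ b = a ≫ f' ∧ h ≫ a⟦(1 : ℤ)⟧' = x ≫ h' :=
  complete_distinguished_triangle_morphism₁ _ _ T T' b x hc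

theorem Tri.complete2 (T : Tri f g h) (T' : Tri f' g' h') (a : A ⟶ A') (x : X ⟶ X')
    (hc : h ≫ a⟦(1 : ℤ)⟧' = x ≫ h') : ∃ b : B ⟶ B', f ≫ b = a ≫ f' ∧ g ≫ x = b ≫ g' :=
  complete_distinguished_triangle_morphism₂ _ _ T T' a x hc

theorem Tri.complete3 (T : Tri f g h) (T' : Tri f' g' h') (a : A ⟶ A') (b : B ⟶ B')
    (hc : f ≫ b = a ≫ f') : ∃ x : X ⟶ X', g ≫ x = b ≫ g' ∧ h ≫ a⟦(1 : ℤ)⟧' = x ≫ h' :=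
  complete_distinguished_triangle_morphism _ _ T T' a b hc

theorem Tri.isIso2 (T : Tri f g h) (T' : Tri f' g' h') (a : A ⟶ A') (b : B ⟶ B') (x : X ⟶ X')
    (h1 : f ≫ b = a ≫ f') (h2 : g ≫ x = b ≫ g') (h3 : h ≫ a⟦(1 : ℤ)⟧' = x ≫ h')
    [IsIso a] [IsIso x] : IsIso b :=
  isIso₂_of_isIso₁₃ (T := Triangle.mk f g h) (T' := Triangle.mk f' g' h')
    ⟨a, b, x, h1, h2, h3⟩ T T' ‹IsIso a› ‹IsIso x›

end TR3

theorem dtri_left {A B X : C} (e : A ≅ B) (hX : IsZero X) : DTri A B X :=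
  ⟨e.hom, 0, 0, (Triangle.distinguished_iff_of_isZero₃ _ hX).2 (inferInstanceAs (IsIso e.hom))⟩

theorem dtri_right {A B X : C} (e : B ≅ X) (hA : IsZero A) : DTri A B X :=
  ⟨0, e.hom, 0, (Triangle.distinguished_iff_of_isZero₁ _ hA).2 (inferInstanceAs (IsIso e.hom))⟩

theorem DTri.iso_of_left {A B X : C} (T : DTri A B X) (hX : IsZero X) : Nonempty (A ≅ B) := by
  obtain ⟨f, g, h, T⟩ := T
  have : IsIso f := (Triangle.isZero₃_iff_isIso₁ _ T).1 hX
  exact ⟨asIso f⟩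

theorem DTri.iso_of_right {A B X : C} (T : DTri A B X) (hA : IsZero A) : Nonempty (B ≅ X) := by
  obtain ⟨f, g, h, T⟩ := T
  have : IsIso g := (Triangle.isZero₁_iff_isIso₂ _ T).1 hA
  exact ⟨asIso g⟩

theorem DTri.zero2 {A B X : C} (T : DTri A B X) (hA : IsZero A) (hX : IsZero X) : IsZero B := by
  obtain ⟨f, g, h, T⟩ := T
  exact Triangle.isZero₂_of_isZero₁₃ _ T hA hX

variable [HasFiniteBiproducts C]

theorem dtri_biprod (A X : C) : DTri A (A ⊞ X) X :=
  ⟨_, _, _, binaryBiproductTriangle_distinguished A X⟩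

theorem Tri.split {A B X : C} {f : A ⟶ B} {g : B ⟶ X} {h : X ⟶ A⟦(1 : ℤ)⟧}
    (T : Tri f g h) (h0 : h = 0) : Nonempty (B ≅ A ⊞ X) := by
  obtain ⟨e, -, -⟩ := exists_iso_binaryBiproduct_of_distTriang _ T h0
  exact ⟨e⟩

/-! ### Retracts -/

theorem retract_biprod {N X Y : C} (y : N ⟶ X) (z : X ⟶ N) (l : N ⟶ Y) (m : Y ⟶ N)
    (h : y ≫ z + l ≫ m = 𝟙 N) : Nonempty (Retract N (X ⊞ Y)) :=
  ⟨⟨biprod.lift y l, biprod.desc z m, by rw [biprod.lift_desc, h]⟩⟩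

theorem retract_inl (X Y : C) : Nonempty (Retract X (X ⊞ Y)) :=
  ⟨⟨biprod.inl, biprod.fst, by simp⟩⟩

theorem retract_inr (X Y : C) : Nonempty (Retract Y (X ⊞ Y)) :=
  ⟨⟨biprod.inr, biprod.snd, by simp⟩⟩

/-- In a triangulated category a retract is a direct summand. -/
theorem Retract.exists_biprod {N X : C} (r : Retract N X) : ∃ Q : C, Nonempty (X ≅ N ⊞ Q) := by
  obtain ⟨Q, g, h, T⟩ := exists_cone r.i
  refine ⟨Q, T.split ?_⟩
  refine (Triangle.mor₃_eq_zero_iff_mono₁ _ T).2 ?_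
  have : IsSplitMono r.i := ⟨⟨⟨r.r, r.retract⟩⟩⟩
  exact inferInstanceAs (Mono r.i)

theorem IsZero.of_retract {N X : C} (r : Retract N X) (hX : IsZero X) : IsZero N := by
  rw [IsZero.iff_id_eq_zero, ← r.retract, hX.eq_of_tgt r.i 0, zero_comp]

theorem IsZero.biprod' {X Y : C} (hX : IsZero X) (hY : IsZero Y) : IsZero (X ⊞ Y) :=
  (dtri_biprod X Y).zero2 hX hY

/-- If `A ⟶ B` factors through a map `A ⟶ Z` that kills the connecting map of `A ⟶ B ⟶ W`, then
`B` is a retract of `Z ⊞ W`. -/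
theorem Tri.retract_of_factor {A B W Z : C} {f : A ⟶ B} {p : B ⟶ W} {θ : W ⟶ A⟦(1 : ℤ)⟧}
    (T : Tri f p θ) (a : A ⟶ Z) (γ : Z ⟶ B) (hf : a ≫ γ = f) (hθ : θ ≫ a⟦(1 : ℤ)⟧' = 0) :
    Nonempty (Retract B (Z ⊞ W)) := by
  obtain ⟨β, hβ⟩ := T.fac6 a hθ
  obtain ⟨y, hy⟩ := T.fac2 (𝟙 B - β ≫ γ) (by
    rw [Preadditive.comp_sub, Category.comp_id, ← Category.assoc, ← hβ, hf, sub_self])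
  exact retract_biprod β γ p y (by rw [← hy]; abel)

end Triangles

end CatEnt

namespace CatEnt

/-! ### Decompositions into indecomposables -/

section SummandCount

variable {C : Type u} [Category.{v} C] [Preadditive C] [HasZeroObject C]
  [HasShift C ℤ] [∀ n : ℤ, (shiftFunctor C n).Additive] [Pretriangulated C]
  [HasFiniteBiproducts C] {H : Set C}

/-- Splitting the last summand off a finite biproduct. -/
theorem biproduct_succ_iso {n : ℕ} (M : Fin (n + 1) → C) :
    Nonempty ((⨁ M) ≅ (⨁ fun i : Fin n => M i.castSucc) ⊞ M (Fin.last n)) := by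
  refine ⟨⟨biprod.lift (biproduct.lift fun i : Fin n => biproduct.π M i.castSucc)
      (biproduct.π M (Fin.last n)),
    biprod.desc (biproduct.desc fun i : Fin n => biproduct.ι M i.castSucc)
      (biproduct.ι M (Fin.last n)), ?_, ?_⟩⟩
  · rw [biprod.lift_desc, biproduct.lift_desc, ← biproduct.total, Fin.sum_univ_castSucc]
  · have hne : ∀ i : Fin n, i.castSucc ≠ Fin.last n := fun i => (Fin.castSucc_lt_last i).ne
    apply biprod.hom_ext'
    · apply biproduct.hom_ext'
      intro j
      apply biprod.hom_ext
      · apply biproduct.hom_ext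
        intro i
        by_cases hij : j = i
        · subst hij; simp
        · have : j.castSucc ≠ i.castSucc := fun h => hij (Fin.castSucc_injective _ h)
          simp [biproduct.ι_π_ne _ this, biproduct.ι_π_ne _ hij]
      · simp [biproduct.ι_π_ne _ (hne j)]
    · apply biprod.hom_ext
      · apply biproduct.hom_ext
        intro i
        simp [biproduct.ι_π_ne _ (hne i).symm]
      · simp

theorem summandCount_iso {X Y : C} {n : ℕ} (h : HasSummandCountIn C H X n) (e : X ≅ Y) :
    HasSummandCountIn C H Y n := by
  obtain ⟨M, hM, ⟨e'⟩⟩ := h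
  exact ⟨M, hM, ⟨e.symm ≪≫ e'⟩⟩

theorem isZero_biproduct_empty (M : Fin 0 → C) : IsZero (⨁ M) := by
  rw [IsZero.iff_id_eq_zero]
  apply biproduct.hom_ext'
  exact fun j => j.elim0

theorem summandCount_zero {X : C} : HasSummandCountIn C H X 0 ↔ IsZero X := by
  constructor
  · rintro ⟨M, -, ⟨e⟩⟩
    exact (isZero_biproduct_empty M).of_iso e
  · intro h
    exact ⟨fun i => i.elim0, fun i => i.elim0, ⟨h.iso (isZero_biproduct_empty _)⟩⟩

theorem summandCount_succ {X : C} {n : ℕ} : HasSummandCountIn C H X (n + 1) ↔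
    ∃ X' M : C, HasSummandCountIn C H X' n ∧ IndecIn C H M ∧ Nonempty (X ≅ X' ⊞ M) := by
  constructor
  · rintro ⟨M, hM, ⟨e⟩⟩
    obtain ⟨e'⟩ := biproduct_succ_iso M
    exact ⟨_, _, ⟨_, fun i => hM i.castSucc, ⟨Iso.refl _⟩⟩, hM _, ⟨e ≪≫ e'⟩⟩
  · rintro ⟨X', M, ⟨N, hN, ⟨e⟩⟩, hM, ⟨e'⟩⟩
    refine ⟨Fin.snoc N M, ?_, ?_⟩
    · intro i
      induction i using Fin.lastCases with
      | last => simpa using hM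
      | cast i => simpa using hN i
    · obtain ⟨e''⟩ := biproduct_succ_iso (Fin.snoc N M : Fin (n + 1) → C)
      simp only [Fin.snoc_castSucc, Fin.snoc_last] at e''
      exact ⟨e' ≪≫ biprod.mapIso e (Iso.refl _) ≪≫ e''.symm⟩

theorem summandCount_biprod {X Y : C} {n m : ℕ} (hX : HasSummandCountIn C H X n)
    (hY : HasSummandCountIn C H Y m) : HasSummandCountIn C H (X ⊞ Y) (n + m) := by
  induction m generalizing Y with
  | zero =>
    rw [summandCount_zero] at hY
    obtain ⟨e⟩ := (dtri_biprod X Y).iso_of_left hY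
    exact summandCount_iso hX e
  | succ m ih =>
    obtain ⟨Y', M, hY', hM, ⟨e⟩⟩ := summandCount_succ.1 hY
    exact summandCount_succ.2 ⟨X ⊞ Y', M, ih hY', hM,
      ⟨biprod.mapIso (Iso.refl _) e ≪≫ (biprod.associator X Y' M).symm⟩⟩

/-- The number of summands does not increase when passing to a direct summand. -/
theorem summandCount_summand (hfin : FiniteCoheart C H) {X Y Q : C} {n : ℕ}
    (hX : HasSummandCountIn C H X n) (hXH : X ∈ H) (hY : Y ∈ H) (hQ : Q ∈ H)
    (e : X ≅ Y ⊞ Q) : ∃ m ≤ n, HasSummandCountIn C H Y m := by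
  obtain ⟨m, hm⟩ := hfin.1 Y hY
  obtain ⟨q, hq⟩ := hfin.1 Q hQ
  have hX' := summandCount_iso (summandCount_biprod hm hq) e.symm
  obtain ⟨M, hM, hMX⟩ := hX
  obtain ⟨N, hN, hNX⟩ := hX'
  obtain ⟨f, -⟩ := hfin.2.1 X hXH _ _ M N hM hN hMX hNX
  have := Fintype.card_congr f
  simp only [Fintype.card_fin] at this
  exact ⟨m, by omega, hm⟩

end SummandCount

end CatEnt

namespace CatEnt

/-! ### Weights -/

section Weights

variable {C : Type u} [Category.{v} C] [Preadditive C] [HasZeroObject C]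
  [HasShift C ℤ] [∀ n : ℤ, (shiftFunctor C n).Additive] [Pretriangulated C]

theorem shAdd (X : C) (a b c : ℤ) (h : a + b = c) : Nonempty (X⟦a⟧⟦b⟧ ≅ X⟦c⟧) :=
  ⟨((shiftFunctorAdd' C a b c h).app X).symm⟩

theorem shZero (X : C) : Nonempty (X⟦(0 : ℤ)⟧ ≅ X) := ⟨(shiftFunctorZero C ℤ).app X⟩

theorem shCancel (X : C) (a b : ℤ) (h : a + b = 0) : Nonempty (X⟦a⟧⟦b⟧ ≅ X) := by
  obtain ⟨e⟩ := shAdd X a b 0 h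
  obtain ⟨e'⟩ := shZero X
  exact ⟨e ≪≫ e'⟩

theorem IsZero.shift {X : C} (h : IsZero X) (n : ℤ) : IsZero (X⟦n⟧) :=
  Functor.map_isZero (shiftFunctor C n) h

theorem IsZero.of_shift {X : C} {n : ℤ} (h : IsZero (X⟦n⟧)) : IsZero X := by
  obtain ⟨e⟩ := shCancel X n (-n) (by omega)
  exact (IsZero.shift h (-n)).of_iso e.symm

theorem biprod_shift [HasFiniteBiproducts C] (X Y : C) (n : ℤ) :
    Nonempty ((X ⊞ Y)⟦n⟧ ≅ X⟦n⟧ ⊞ Y⟦n⟧) :=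
  have : PreservesBinaryBiproducts (shiftFunctor C n) :=
    preservesBinaryBiproducts_of_preservesBiproducts _
  ⟨(shiftFunctor C n).mapBiprod X Y⟩

/-- A bounded co-t-structure with finite co-heart, reindexed by weights:
`Ge a X` says that all weights of `X` are at most `a`, `Le a X` that they are at least `a`,
so that every map from an object with `Ge a` to an object with `Le b`, `a < b`, vanishes. -/
structure Wt (C : Type u) [Category.{v} C] [Preadditive C] [HasZeroObject C]
    [HasShift C ℤ] [∀ n : ℤ, (shiftFunctor C n).Additive] [Pretriangulated C]
    [HasFiniteBiproducts C] where
  H : Set C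
  hfin : FiniteCoheart C H
  Ge : ℤ → C → Prop
  Le : ℤ → C → Prop
  orth : ∀ {a b : ℤ} {X Z : C}, Ge a X → Le b Z → a < b → ∀ f : X ⟶ Z, f = 0
  ge_shift : ∀ {a : ℤ} {X : C} (k : ℤ), Ge a X → Ge (a + k) (X⟦k⟧)
  le_shift : ∀ {a : ℤ} {X : C} (k : ℤ), Le a X → Le (a + k) (X⟦k⟧)
  ge_mono : ∀ {a b : ℤ} {X : C}, Ge a X → a ≤ b → Ge b X
  le_mono : ∀ {a b : ℤ} {X : C}, Le a X → b ≤ a → Le b X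
  ge_of : ∀ {a : ℤ} {X : C}, (∀ Z : C, Le (a + 1) Z → ∀ f : X ⟶ Z, f = 0) → Ge a X
  le_of : ∀ {a : ℤ} {Z : C}, (∀ X : C, Ge (a - 1) X → ∀ f : X ⟶ Z, f = 0) → Le a Z
  trunc : ∀ (E : C) (a : ℤ), ∃ T U : C, DTri T E U ∧ Ge (a - 1) T ∧ Le a U
  bdd : ∀ E : C, ∃ a b : ℤ, Ge b E ∧ Le a E
  mem_H : ∀ X : C, X ∈ H ↔ Ge 0 X ∧ Le 0 X

variable [HasFiniteBiproducts C]

/-- The weights attached to a bounded co-t-structure. -/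
theorem exists_wt (ge le : Set C) (hco : IsCoTStructureIn C Set.univ ge le)
    (hbd : IsBoundedIn C Set.univ ge le) (hfin : FiniteCoheart C (coheart C ge le)) :
    ∃ w : Wt C, w.H = coheart C ge le := by
  have gshift : ∀ (k : ℕ) (X : C), X ∈ ge → X⟦(-k : ℤ)⟧ ∈ ge := by
    intro k
    induction k with
    | zero =>
      intro X hX
      obtain ⟨e⟩ := shZero X
      exact hco.ge_iso (e.symm ≪≫ eqToIso (by simp)) hX
    | succ k ih =>
      intro X hX
      obtain ⟨e⟩ := shAdd X (-k : ℤ) (-1) (-(k + 1 : ℕ) : ℤ) (by push_cast; ring)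
      exact hco.ge_iso e (hco.shift_ge _ (ih X hX))
  have lshift : ∀ (k : ℕ) (X : C), X ∈ le → X⟦(k : ℤ)⟧ ∈ le := by
    intro k
    induction k with
    | zero =>
      intro X hX
      obtain ⟨e⟩ := shZero X
      exact hco.le_iso (e.symm ≪≫ eqToIso (by simp)) hX
    | succ k ih =>
      intro X hX
      obtain ⟨e⟩ := shAdd X (k : ℤ) 1 ((k + 1 : ℕ) : ℤ) (by push_cast; ring)
      exact hco.le_iso e (hco.shift_le _ (ih X hX))
  have gmono : ∀ (a b : ℤ) (X : C), X⟦a⟧ ∈ ge → b ≤ a → X⟦b⟧ ∈ ge := by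
    intro a b X hX hab
    obtain ⟨k, hk⟩ := Int.eq_ofNat_of_zero_le (sub_nonneg.2 hab)
    obtain ⟨e⟩ := shAdd X a (-k : ℤ) b (by omega)
    exact hco.ge_iso e (gshift k _ hX)
  have lmono : ∀ (a b : ℤ) (X : C), X⟦a⟧ ∈ le → a ≤ b → X⟦b⟧ ∈ le := by
    intro a b X hX hab
    obtain ⟨k, hk⟩ := Int.eq_ofNat_of_zero_le (sub_nonneg.2 hab)
    obtain ⟨e⟩ := shAdd X a (k : ℤ) b (by omega)
    exact hco.le_iso e (lshift k _ hX)
  have htr : ∀ (E : C) (a : ℤ), ∃ T U : C, DTri T E U ∧ T⟦-(a - 1)⟧ ∈ ge ∧ U⟦-a⟧ ∈ le := by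
    intro E a
    obtain ⟨T, U, hT, hU, f, g, h, hd⟩ := hco.exists_triangle (E⟦-a⟧) (Set.mem_univ _)
    obtain ⟨e⟩ := shCancel E (-a) a (by omega)
    refine ⟨T⟦a⟧, U⟦a⟧, DTri.iso (DTri.shift ⟨f, g, h, hd⟩ a) (Iso.refl _) e (Iso.refl _), ?_, ?_⟩
    · obtain ⟨e1⟩ := shAdd T a (-(a - 1)) 1 (by omega)
      exact hco.ge_iso e1.symm hT
    · obtain ⟨e1⟩ := shCancel U a (-a) (by omega)
      exact hco.le_iso e1.symm hU
  have gretr : ∀ X Y : C, Retract X Y → ∀ a : ℤ, Y⟦a⟧ ∈ ge → X⟦a⟧ ∈ ge := by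
    intro X Y r a hY
    obtain ⟨Q, ⟨e⟩⟩ := Retract.exists_biprod (r.map (shiftFunctor C a))
    exact hco.ge_summand _ Q (hco.ge_iso e hY)
  have lretr : ∀ X Y : C, Retract X Y → ∀ a : ℤ, Y⟦a⟧ ∈ le → X⟦a⟧ ∈ le := by
    intro X Y r a hY
    obtain ⟨Q, ⟨e⟩⟩ := Retract.exists_biprod (r.map (shiftFunctor C a))
    exact hco.le_summand _ Q (hco.le_iso e hY)
  refine ⟨{
    H := coheart C ge le
    hfin := hfin
    Ge := fun a X => X⟦-a⟧ ∈ ge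
    Le := fun a X => X⟦-a⟧ ∈ le
    orth := ?_
    ge_shift := ?_
    le_shift := ?_
    ge_mono := fun h hab => gmono _ _ _ h (by omega)
    le_mono := fun h hab => lmono _ _ _ h (by omega)
    ge_of := ?_
    le_of := ?_
    trunc := htr
    bdd := ?_
    mem_H := ?_ }, rfl⟩
  · intro a b X Z hX hZ hab f
    have h1 : X⟦-b⟧⟦(1 : ℤ)⟧ ∈ ge := by
      obtain ⟨e⟩ := shAdd X (-b) 1 (1 - b) (by omega)
      exact hco.ge_iso e.symm (gmono _ _ _ hX (by omega))
    have := hco.hom_zero _ h1 _ hZ (f⟦-b⟧')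
    exact (shiftFunctor C (-b)).map_injective (by rw [this, Functor.map_zero])
  · intro a X k hX
    obtain ⟨e⟩ := shAdd X k (-(a + k)) (-a) (by omega)
    exact hco.ge_iso e.symm hX
  · intro a X k hX
    obtain ⟨e⟩ := shAdd X k (-(a + k)) (-a) (by omega)
    exact hco.le_iso e.symm hX
  · intro a X h
    obtain ⟨T, U, ⟨f, g, k, hd⟩, hT, hU⟩ := htr X (a + 1)
    obtain ⟨y, hy⟩ := hd.fac1 (𝟙 X) (by rw [h U hU g, comp_zero])
    exact gretr X T ⟨y, f, hy.symm⟩ _ (by simpa using hT)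
  · intro a Z h
    obtain ⟨T, U, ⟨f, g, k, hd⟩, hT, hU⟩ := htr Z a
    obtain ⟨y, hy⟩ := hd.fac2 (𝟙 Z) (by rw [h T hT f, zero_comp])
    exact lretr Z U ⟨g, y, hy.symm⟩ _ hU
  · intro E
    obtain ⟨⟨k, hk⟩, ⟨l, hl⟩⟩ := hbd E (Set.mem_univ _)
    exact ⟨-l, -k, by simpa using hk, by simpa using hl⟩
  · intro X
    obtain ⟨e⟩ := shZero X
    constructor
    · rintro ⟨h1, h2⟩
      exact ⟨hco.ge_iso (e.symm ≪≫ eqToIso (by simp)) h1,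
        hco.le_iso (e.symm ≪≫ eqToIso (by simp)) h2⟩
    · rintro ⟨h1, h2⟩
      exact ⟨hco.ge_iso (eqToIso (by simp) ≪≫ e) h1, hco.le_iso (eqToIso (by simp) ≪≫ e) h2⟩

namespace Wt

variable (w : Wt C)

variable {w} {a b : ℤ} {X Y A B : C}

theorem ge_retract (h : w.Ge a X) (r : Retract Y X) : w.Ge a Y := by
  refine w.ge_of fun Z hZ f => ?_
  rw [← Category.id_comp f, ← r.retract, Category.assoc, w.orth h hZ (by omega) (r.r ≫ f),
    comp_zero]

theorem le_retract (h : w.Le a X) (r : Retract Y X) : w.Le a Y := by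
  refine w.le_of fun Z hZ f => ?_
  rw [← Category.comp_id f, ← r.retract, ← Category.assoc, w.orth hZ h (by omega) (f ≫ r.i),
    zero_comp]

theorem ge_iso (h : w.Ge a X) (e : X ≅ Y) : w.Ge a Y := ge_retract h (Retract.ofIso e.symm)

theorem le_iso (h : w.Le a X) (e : X ≅ Y) : w.Le a Y := le_retract h (Retract.ofIso e.symm)

theorem ge_ext (T : DTri A B X) (hA : w.Ge a A) (hX : w.Ge a X) : w.Ge a B := by
  obtain ⟨f, g, h, T⟩ := T
  refine w.ge_of fun Z hZ x => ?_
  obtain ⟨y, rfl⟩ := T.fac2 x (w.orth hA hZ (by omega) _)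
  rw [w.orth hX hZ (by omega) y, comp_zero]

theorem le_ext (T : DTri A B X) (hA : w.Le a A) (hX : w.Le a X) : w.Le a B := by
  obtain ⟨f, g, h, T⟩ := T
  refine w.le_of fun Z hZ x => ?_
  obtain ⟨y, rfl⟩ := T.fac1 x (w.orth hZ hX (by omega) _)
  rw [w.orth hZ hA (by omega) y, zero_comp]

theorem ge_zero (h : IsZero X) : w.Ge a X := w.ge_of fun _ _ _ => h.eq_of_src _ _

theorem le_zero (h : IsZero X) : w.Le a X := w.le_of fun _ _ _ => h.eq_of_tgt _ _

theorem ge_shift' (h : w.Ge a X) (k : ℤ) (hk : a + k = b) : w.Ge b (X⟦k⟧) := by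
  subst hk; exact w.ge_shift k h

theorem le_shift' (h : w.Le a X) (k : ℤ) (hk : a + k = b) : w.Le b (X⟦k⟧) := by
  subst hk; exact w.le_shift k h

theorem isZero_of_lt (h1 : w.Ge a X) (h2 : w.Le b X) (hab : a < b) : IsZero X := by
  rw [IsZero.iff_id_eq_zero]
  exact w.orth h1 h2 hab _

variable (w)

/-- `X` is pure of weight `a`, with at most `s` indecomposable summands. -/
def Blk (a : ℤ) (s : ℕ) (X : C) : Prop :=
  ∃ (Y : C) (s' : ℕ), Y ∈ w.H ∧ HasSummandCountIn C w.H Y s' ∧ s' ≤ s ∧ Nonempty (X ≅ Y⟦a⟧)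

variable {w} {s s' : ℕ}

theorem mem_iff_shift : Y ∈ w.H ↔ w.Ge a (Y⟦a⟧) ∧ w.Le a (Y⟦a⟧) := by
  rw [w.mem_H]
  constructor
  · rintro ⟨h1, h2⟩
    exact ⟨ge_shift' h1 a (by omega), le_shift' h2 a (by omega)⟩
  · rintro ⟨h1, h2⟩
    obtain ⟨e⟩ := shCancel Y a (-a) (by omega)
    exact ⟨ge_iso (ge_shift' h1 (-a) (by omega)) e, le_iso (le_shift' h2 (-a) (by omega)) e⟩

theorem blk_iso (h : w.Blk a s X) (e : X ≅ Y) : w.Blk a s Y := by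
  obtain ⟨Z, s', hZ, hs, hle, ⟨e'⟩⟩ := h
  exact ⟨Z, s', hZ, hs, hle, ⟨e.symm ≪≫ e'⟩⟩

theorem blk_mono (h : w.Blk a s X) (hs : s ≤ s') : w.Blk a s' X := by
  obtain ⟨Z, s1, hZ, hs1, hle, e⟩ := h
  exact ⟨Z, s1, hZ, hs1, hle.trans hs, e⟩

theorem blk_ge (h : w.Blk a s X) : w.Ge a X := by
  obtain ⟨Z, s1, hZ, hs1, hle, ⟨e⟩⟩ := h
  exact ge_iso (mem_iff_shift.1 hZ).1 e.symm

theorem blk_le (h : w.Blk a s X) : w.Le a X := by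
  obtain ⟨Z, s1, hZ, hs1, hle, ⟨e⟩⟩ := h
  exact le_iso (mem_iff_shift.1 hZ).2 e.symm

theorem exists_mem (h1 : w.Ge a X) (h2 : w.Le a X) : ∃ Y ∈ w.H, Nonempty (X ≅ Y⟦a⟧) := by
  obtain ⟨e⟩ := shCancel X (-a) a (by omega)
  exact ⟨X⟦-a⟧, mem_iff_shift.2 ⟨ge_iso h1 e.symm, le_iso h2 e.symm⟩, ⟨e.symm⟩⟩

theorem exists_blk (h1 : w.Ge a X) (h2 : w.Le a X) : ∃ s, w.Blk a s X := by
  obtain ⟨Y, hY, e⟩ := exists_mem h1 h2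
  obtain ⟨s, hs⟩ := w.hfin.1 Y hY
  exact ⟨s, Y, s, hY, hs, le_rfl, e⟩

theorem mem_retract (h : X ∈ w.H) (r : Retract Y X) : Y ∈ w.H := by
  rw [w.mem_H] at h ⊢
  exact ⟨ge_retract h.1 r, le_retract h.2 r⟩

theorem blk_retract (h : w.Blk a s X) (r : Retract Y X) : w.Blk a s Y := by
  obtain ⟨Z, hZ, ⟨eZ⟩⟩ := exists_mem (ge_retract (blk_ge h) r) (le_retract (blk_le h) r)
  obtain ⟨X', s', hX', hs, hle, ⟨e'⟩⟩ := h
  have r1 : Retract (Z⟦a⟧) (X'⟦a⟧) :=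
    (Retract.ofIso eZ.symm).trans (r.trans (Retract.ofIso e'))
  obtain ⟨e1⟩ := shCancel Z a (-a) (by omega)
  obtain ⟨e2⟩ := shCancel X' a (-a) (by omega)
  have r2 : Retract Z X' :=
    (Retract.ofIso e1.symm).trans ((r1.map (shiftFunctor C (-a))).trans (Retract.ofIso e2))
  obtain ⟨Q, ⟨e⟩⟩ := Retract.exists_biprod r2
  obtain ⟨rQ⟩ := retract_inr Z Q
  have hQ : Q ∈ w.H := mem_retract hX' (rQ.trans (Retract.ofIso e.symm))
  obtain ⟨m, hm, hc⟩ := summandCount_summand w.hfin hs hX' hZ hQ e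
  exact ⟨Z, m, hZ, hc, hm.trans hle, ⟨eZ⟩⟩

theorem blk_biprod (h : w.Blk a s X) (h' : w.Blk a s' Y) : w.Blk a (s + s') (X ⊞ Y) := by
  obtain ⟨X', s1, hX', hs, hle, ⟨e⟩⟩ := h
  obtain ⟨Y', s2, hY', hs', hle', ⟨e'⟩⟩ := h'
  obtain ⟨e''⟩ := biprod_shift X' Y' a
  refine ⟨X' ⊞ Y', s1 + s2, ?_, summandCount_biprod hs hs', by omega,
    ⟨biprod.mapIso e e' ≪≫ e''.symm⟩⟩
  rw [w.mem_H] at hX' hY' ⊢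
  exact ⟨ge_ext (dtri_biprod _ _) hX'.1 hY'.1, le_ext (dtri_biprod _ _) hX'.2 hY'.2⟩

theorem blk_zero (h : IsZero X) : w.Blk a s X :=
  ⟨X, 0, (w.mem_H X).2 ⟨ge_zero h, le_zero h⟩, summandCount_zero.2 h, by omega,
    ⟨h.iso (IsZero.shift h a)⟩⟩

theorem isZero_of_blk (h : w.Blk a 0 X) : IsZero X := by
  obtain ⟨X', s1, hX', hs, hle, ⟨e⟩⟩ := h
  obtain rfl : s1 = 0 := by omega
  exact (IsZero.shift (summandCount_zero.1 hs) a).of_iso e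

theorem blk_shift (h : w.Blk a s X) (k : ℤ) : w.Blk (a + k) s (X⟦k⟧) := by
  obtain ⟨X', s1, hX', hs, hle, ⟨e⟩⟩ := h
  obtain ⟨e'⟩ := shAdd X' a k (a + k) rfl
  exact ⟨X', s1, hX', hs, hle, ⟨(shiftFunctor C k).mapIso e ≪≫ e'⟩⟩

theorem blk_shift' (h : w.Blk a s X) (k : ℤ) (hk : a + k = b) : w.Blk b s (X⟦k⟧) := by
  subst hk; exact blk_shift h k

variable (w)

/-- The number of isomorphism classes of indecomposable objects of the co-heart. -/
noncomputable def num : ℕ := w.hfin.2.2.choose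

/-- Representatives of the indecomposable objects of the co-heart. -/
noncomputable def M : Fin w.num → C := w.hfin.2.2.choose_spec.choose

theorem M_indec (i : Fin w.num) : IndecIn C w.H (w.M i) :=
  w.hfin.2.2.choose_spec.choose_spec.1 i

theorem exists_M {T : C} (h : IndecIn C w.H T) : ∃ i, Nonempty (T ≅ w.M i) :=
  w.hfin.2.2.choose_spec.choose_spec.2.2 T h

variable {w}

theorem blk_M (i : Fin w.num) : w.Blk 0 1 (w.M i) := by
  obtain ⟨e⟩ := shZero (w.M i)
  refine ⟨w.M i, 1, (w.M_indec i).1, ?_, le_rfl, ⟨e.symm⟩⟩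
  obtain ⟨Z, hZ⟩ := HasZeroObject.zero (C := C)
  refine summandCount_succ.2 ⟨Z, w.M i, summandCount_zero.2 hZ, w.M_indec i, ?_⟩
  exact ((dtri_biprod Z (w.M i)).iso_of_right hZ).map Iso.symm

/-- A pure object is built from the shifted indecomposables by adding one summand at a time. -/
theorem blk_succ (h : w.Blk a (s + 1) X) : w.Blk a s X ∨ ∃ (X' : C) (i : Fin w.num),
    w.Blk a s X' ∧ Nonempty (X ≅ X' ⊞ (w.M i)⟦a⟧) := by
  obtain ⟨Y, s1, hY, hs, hle, ⟨e⟩⟩ := h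
  rcases Nat.lt_or_ge s s1 with h1 | h1
  · obtain rfl : s1 = s + 1 := by omega
    obtain ⟨Y', N, hY', hN, ⟨e'⟩⟩ := summandCount_succ.1 hs
    obtain ⟨i, ⟨eN⟩⟩ := w.exists_M hN
    obtain ⟨e''⟩ := biprod_shift Y' N a
    obtain ⟨r⟩ := retract_inl Y' N
    refine Or.inr ⟨Y'⟦a⟧, i, ⟨Y', s, mem_retract hY (r.trans (Retract.ofIso e'.symm)), hY', le_rfl,
      ⟨Iso.refl _⟩⟩, ⟨e ≪≫ (shiftFunctor C a).mapIso e' ≪≫ e'' ≪≫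
        biprod.mapIso (Iso.refl _) ((shiftFunctor C a).mapIso eN)⟩⟩
  · exact Or.inl ⟨Y, s1, hY, hs, h1, ⟨e⟩⟩

end Wt

end Weights

end CatEnt

namespace CatEnt

/-! ### Weight truncations and objects built from pure objects -/

section Truncation

variable {C : Type u} [Category.{v} C] [Preadditive C] [HasZeroObject C]
  [HasShift C ℤ] [∀ n : ℤ, (shiftFunctor C n).Additive] [Pretriangulated C]
  [HasFiniteBiproducts C] (w : Wt C)

/-- `φ : F ⟶ U` is a left weight truncation of `F` to weights `≥ m`; this is the property of the
map `F ⟶ U` in a weight decomposition of `F`, phrased without the third vertex. -/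
structure Approx (m : ℤ) {F U : C} (φ : F ⟶ U) : Prop where
  le : w.Le m U
  surj : ∀ {Z : C}, w.Le m Z → ∀ x : F ⟶ Z, ∃ y : U ⟶ Z, x = φ ≫ y
  inj : ∀ {Z : C}, w.Le (m + 1) Z → ∀ y : U ⟶ Z, φ ≫ y = 0 → y = 0

/-- Dual to `Approx`: `τ : T ⟶ F` is a right weight truncation of `F` to weights `≤ m`. -/
structure CoApprox (m : ℤ) {T F : C} (τ : T ⟶ F) : Prop where
  ge : w.Ge m T
  surj : ∀ {X : C}, w.Ge m X → ∀ x : X ⟶ F, ∃ y : X ⟶ T, x = y ≫ τ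
  inj : ∀ {X : C}, w.Ge (m - 1) X → ∀ y : X ⟶ T, y ≫ τ = 0 → y = 0

/-- `Built w t P c F`: the object `F` is obtained by iterated extensions, in any order, from pure
objects whose weights lie in `P`, with total cost at most `c`. Here a pure object of weight `k`
with `s` indecomposable summands costs `s * exp (k * t)`. -/
inductive Built (t : ℝ) (P : Set ℤ) : ℝ → C → Prop
  | zero {c : ℝ} {F : C} : 0 ≤ c → IsZero F → Built t P c F
  | blk {c : ℝ} {k : ℤ} {s : ℕ} {F : C} : k ∈ P → w.Blk k s F → s * Real.exp (k * t) ≤ c →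
      Built t P c F
  | ext {c₁ c₂ c : ℝ} {A B X : C} : DTri A B X → Built t P c₁ A → Built t P c₂ X →
      c₁ + c₂ ≤ c → Built t P c B

variable {w} {t : ℝ} {P P' : Set ℤ} {c c' : ℝ} {m : ℤ}

theorem Built.nonneg {F : C} (h : Built w t P c F) : 0 ≤ c := by
  induction h with
  | zero hc _ => exact hc
  | blk _ _ hc => exact le_trans (by positivity) hc
  | ext _ _ _ hc h1 h2 => linarith

theorem Built.mono {F : C} (h : Built w t P c F) (hP : P ⊆ P') (hc : c ≤ c') :
    Built w t P' c' F := by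
  induction h generalizing c' with
  | zero h0 hF => exact .zero (h0.trans hc) hF
  | blk hk hF h0 => exact .blk (hP hk) hF (h0.trans hc)
  | ext T _ _ h0 h1 h2 => exact .ext T (h1 le_rfl) (h2 le_rfl) (h0.trans hc)

theorem Built.iso {F F' : C} (h : Built w t P c F) (e : F ≅ F') : Built w t P c F' := by
  cases h with
  | zero h0 hF => exact .zero h0 (hF.of_iso e.symm)
  | blk hk hF h0 => exact .blk hk (Wt.blk_iso hF e) h0
  | ext T h1 h2 h0 => exact .ext (T.iso (Iso.refl _) e (Iso.refl _)) h1 h2 h0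

theorem Built.shift {F : C} (h : Built w t Set.univ c F) (k : ℤ) :
    Built w t Set.univ (c * Real.exp (k * t)) (F⟦k⟧) := by
  induction h with
  | zero h0 hF => exact .zero (by positivity) (IsZero.shift hF k)
  | @blk c l s F hk hF h0 =>
    refine .blk (Set.mem_univ (l + k)) (Wt.blk_shift hF k) ?_
    push_cast
    rw [add_mul, Real.exp_add, ← mul_assoc]
    gcongr
  | ext T _ _ h0 h1 h2 =>
    refine .ext (T.shift k) h1 h2 ?_
    rw [← add_mul]
    gcongr

theorem Built.biprod {F F' : C} (h : Built w t P c F) (h' : Built w t P c' F') :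
    Built w t P (c + c') (F ⊞ F') := .ext (dtri_biprod F F') h h' le_rfl

theorem Approx.id {F : C} (h : w.Le m F) : Approx w m (𝟙 F) where
  le := h
  surj _ x := ⟨x, by simp⟩
  inj _ y hy := by simpa using hy

theorem Approx.zero {F U : C} (h : w.Ge (m - 1) F) (hU : IsZero U) (φ : F ⟶ U) :
    Approx w m φ where
  le := Wt.le_zero hU
  surj hZ x := ⟨0, by rw [comp_zero]; exact w.orth h hZ (by omega) x⟩
  inj _ y _ := hU.eq_of_src _ _

theorem CoApprox.id {F : C} (h : w.Ge m F) : CoApprox w m (𝟙 F) where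
  ge := h
  surj _ x := ⟨x, by simp⟩
  inj _ y hy := by simpa using hy

theorem CoApprox.zero {F T : C} (h : w.Le (m + 1) F) (hT : IsZero T) (τ : T ⟶ F) :
    CoApprox w m τ where
  ge := Wt.ge_zero hT
  surj hZ x := ⟨0, by rw [zero_comp]; exact w.orth hZ h (by omega) x⟩
  inj _ y _ := hT.eq_of_tgt _ _

theorem Approx.shift {F U : C} {φ : F ⟶ U} (h : Approx w m φ) :
    Approx w (m + 1) (φ⟦(1 : ℤ)⟧') where
  le := w.le_shift 1 h.le
  surj {Z} hZ x := by
    obtain ⟨e⟩ := shCancel Z (-1) 1 (by omega)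
    obtain ⟨x', hx'⟩ := (shiftFunctor C (1 : ℤ)).map_surjective (x ≫ e.inv)
    obtain ⟨y, hy⟩ := h.surj (Wt.le_shift' hZ (-1) (by omega)) x'
    refine ⟨y⟦(1 : ℤ)⟧' ≫ e.hom, ?_⟩
    rw [← Category.assoc, ← Functor.map_comp, ← hy, hx', Category.assoc, e.inv_hom_id,
      Category.comp_id]
  inj {Z} hZ y hy := by
    obtain ⟨e⟩ := shCancel Z (-1) 1 (by omega)
    obtain ⟨y', hy'⟩ := (shiftFunctor C (1 : ℤ)).map_surjective (y ≫ e.inv)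
    have := h.inj (Wt.le_shift' hZ (-1) (by omega)) y'
      ((shiftFunctor C (1 : ℤ)).map_injective (by
        rw [Functor.map_comp, hy', ← Category.assoc, hy, zero_comp, Functor.map_zero]))
    rw [← cancel_mono e.inv, ← hy', this, Functor.map_zero, zero_comp]

theorem CoApprox.shift {F T : C} {τ : T ⟶ F} (h : CoApprox w m τ) :
    CoApprox w (m + 1) (τ⟦(1 : ℤ)⟧') where
  ge := w.ge_shift 1 h.ge
  surj {Z} hZ x := by
    obtain ⟨e⟩ := shCancel Z (-1) 1 (by omega)
    obtain ⟨x', hx'⟩ := (shiftFunctor C (1 : ℤ)).map_surjective (e.hom ≫ x)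
    obtain ⟨y, hy⟩ := h.surj (Wt.ge_shift' hZ (-1) (by omega)) x'
    refine ⟨e.inv ≫ y⟦(1 : ℤ)⟧', ?_⟩
    rw [Category.assoc, ← Functor.map_comp, ← hy, hx', e.inv_hom_id_assoc]
  inj {Z} hZ y hy := by
    obtain ⟨e⟩ := shCancel Z (-1) 1 (by omega)
    obtain ⟨y', hy'⟩ := (shiftFunctor C (1 : ℤ)).map_surjective (e.hom ≫ y)
    have := h.inj (Wt.ge_shift' hZ (-1) (by omega)) y'
      ((shiftFunctor C (1 : ℤ)).map_injective (by
        rw [Functor.map_comp, hy', Category.assoc, hy, comp_zero, Functor.map_zero]))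
    rw [← cancel_epi e.hom, ← hy', this, Functor.map_zero, comp_zero]

/-- Left truncations of the outer terms of a triangle extend to the middle term. -/
theorem Approx.ext {A B X UA UX : C} {i : A ⟶ B} {p : B ⟶ X} {θ : X ⟶ A⟦(1 : ℤ)⟧}
    (T : Tri i p θ) {α : A ⟶ UA} {κ : X ⟶ UX} (hα : Approx w m α) (hκ : Approx w m κ) :
    ∃ (U : C) (φ : B ⟶ U), DTri UA U UX ∧ Approx w m φ := by
  obtain ⟨θ', hθ'⟩ := hκ.surj (w.le_mono (w.le_shift 1 hα.le) (by omega)) (θ ≫ α⟦(1 : ℤ)⟧')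
  obtain ⟨U, j, q, T'⟩ := exists_mid θ'
  obtain ⟨φ, hφ1, hφ2⟩ := T.complete2 T' α κ hθ'
  refine ⟨U, φ, T'.dtri, Wt.le_ext T'.dtri hα.le hκ.le, ?_, ?_⟩
  · intro Z hZ x
    obtain ⟨g1, hg1⟩ := hα.surj hZ (i ≫ x)
    obtain ⟨g2, hg2⟩ := T'.fac6 g1 (hκ.inj (w.le_shift 1 hZ) _ (by
      rw [← Category.assoc, ← hθ', Category.assoc, ← Functor.map_comp, ← hg1, Functor.map_comp,
        ← Category.assoc, T.z31, zero_comp]))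
    obtain ⟨h, hh⟩ := T.fac2 (x - φ ≫ g2) (by
      rw [Preadditive.comp_sub, ← Category.assoc, hφ1, Category.assoc, ← hg2, hg1, sub_self])
    obtain ⟨h', rfl⟩ := hκ.surj hZ h
    refine ⟨g2 + q ≫ h', ?_⟩
    rw [Preadditive.comp_add, ← Category.assoc, ← hφ2, Category.assoc, ← hh]
    abel
  · intro Z hZ y hy
    obtain ⟨h, rfl⟩ := T'.fac2 y (hα.inj hZ _ (by
      rw [← Category.assoc, ← hφ1, Category.assoc, hy, comp_zero]))
    obtain ⟨l, hl⟩ := T.fac4 (κ ≫ h) (by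
      rw [← Category.assoc, hφ2, Category.assoc, hy])
    obtain ⟨l', rfl⟩ := hα.shift.surj hZ l
    have : h = θ' ≫ l' := by
      rw [← sub_eq_zero]
      refine hκ.inj hZ _ ?_
      rw [Preadditive.comp_sub, hl, ← Category.assoc, hθ', Category.assoc, sub_self]
    rw [this, ← Category.assoc, T'.z23, zero_comp]

/-- Right truncations of the outer terms of a triangle extend to the middle term. -/
theorem CoApprox.ext {A B X TA TX : C} {i : A ⟶ B} {p : B ⟶ X} {θ : X ⟶ A⟦(1 : ℤ)⟧}
    (T : Tri i p θ) {α : TA ⟶ A} {κ : TX ⟶ X} (hα : CoApprox w m α) (hκ : CoApprox w m κ) :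
    ∃ (U : C) (φ : U ⟶ B), DTri TA U TX ∧ CoApprox w m φ := by
  obtain ⟨θ', hθ'⟩ := hα.shift.surj (w.ge_mono hκ.ge (by omega)) (κ ≫ θ)
  obtain ⟨U, j, q, T'⟩ := exists_mid θ'
  obtain ⟨φ, hφ1, hφ2⟩ := T'.complete2 T α κ hθ'.symm
  refine ⟨U, φ, T'.dtri, Wt.ge_ext T'.dtri hα.ge hκ.ge, ?_, ?_⟩
  · intro Z hZ x
    obtain ⟨g1, hg1⟩ := hκ.surj hZ (x ≫ p)
    obtain ⟨g2, hg2⟩ := T'.fac3 g1 (hα.shift.inj (w.ge_mono hZ (by omega)) _ (by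
      rw [Category.assoc, ← hθ', ← Category.assoc, ← hg1, Category.assoc, T.z23, comp_zero]))
    obtain ⟨h, hh⟩ := T.fac1 (x - g2 ≫ φ) (by
      rw [Preadditive.sub_comp, Category.assoc, ← hφ2, ← Category.assoc, ← hg2, hg1, sub_self])
    obtain ⟨h', rfl⟩ := hα.surj hZ h
    refine ⟨g2 + h' ≫ j, ?_⟩
    rw [Preadditive.add_comp, Category.assoc, hφ1, ← Category.assoc, ← hh]
    abel
  · intro Z hZ y hy
    obtain ⟨h, rfl⟩ := T'.fac1 y (hκ.inj hZ _ (by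
      rw [Category.assoc, hφ2, ← Category.assoc, hy, zero_comp]))
    obtain ⟨l, hl⟩ := T.fac7 (h ≫ α) (by
      rw [Category.assoc, ← hφ1, ← Category.assoc, hy])
    obtain ⟨l', rfl⟩ := hκ.surj (Wt.ge_shift' hZ 1 (by omega)) l
    have : h⟦(1 : ℤ)⟧' = l' ≫ θ' := by
      rw [← sub_eq_zero]
      refine hα.shift.inj (Wt.ge_shift' hZ 1 (by omega)) _ ?_
      rw [Preadditive.sub_comp, ← Functor.map_comp, hl, Category.assoc, Category.assoc, ← hθ',
        sub_self]
    refine (shiftFunctor C (1 : ℤ)).map_injective ?_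
    rw [Functor.map_comp, this, Category.assoc, T'.z31, comp_zero, Functor.map_zero]

/-- Truncating a built object distributes its pure pieces among the two truncations, so that the
costs add up. -/
theorem Built.trunc {F : C} (h : Built w t P c F) (m : ℤ) :
    ∃ c₁ c₂ : ℝ, c₁ + c₂ ≤ c ∧ ∃ (T U : C) (τ : T ⟶ F) (φ : F ⟶ U),
      CoApprox w (m - 1) τ ∧ Built w t (P ∩ Set.Iio m) c₁ T ∧
      Approx w m φ ∧ Built w t (P ∩ Set.Ici m) c₂ U := by
  induction h with
  | @zero c F h0 hF =>
    exact ⟨0, 0, by simpa using h0, F, F, 𝟙 F, 𝟙 F, .id (Wt.ge_zero hF), .zero le_rfl hF,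
      .id (Wt.le_zero hF), .zero le_rfl hF⟩
  | @blk c k s F hk hF h0 =>
    obtain ⟨Z, hZ⟩ := HasZeroObject.zero (C := C)
    rcases lt_or_ge k m with hm | hm
    · exact ⟨c, 0, by simp, F, Z, 𝟙 F, 0, .id (w.ge_mono (Wt.blk_ge hF) (by omega)),
        .blk ⟨hk, hm⟩ hF h0, .zero (w.ge_mono (Wt.blk_ge hF) (by omega)) hZ _, .zero le_rfl hZ⟩
    · exact ⟨0, c, by simp, Z, F, 0, 𝟙 F,
        .zero (w.le_mono (Wt.blk_le hF) (by omega)) hZ _, .zero le_rfl hZ,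
        .id (w.le_mono (Wt.blk_le hF) (by omega)), .blk ⟨hk, hm⟩ hF h0⟩
  | @ext c₁ c₂ c A B X T _ _ h0 ih1 ih2 =>
    obtain ⟨i, p, θ, T⟩ := T
    obtain ⟨a1, a2, ha, TA, UA, τA, φA, h1, h2, h3, h4⟩ := ih1
    obtain ⟨b1, b2, hb, TX, UX, τX, φX, k1, k2, k3, k4⟩ := ih2
    obtain ⟨U, φ, hU, hφ⟩ := Approx.ext T h3 k3
    obtain ⟨V, τ, hV, hτ⟩ := CoApprox.ext T h1 k1
    exact ⟨a1 + b1, a2 + b2, by linarith, V, U, τ, φ, hτ, .ext hV h2 k2 le_rfl, hφ,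
      .ext hU h4 k4 le_rfl⟩

/-- An object built from pieces of a single weight is pure. -/
theorem Built.pure {F : C} {b : ℤ} (h : Built w t P c F) (hP : ∀ k ∈ P, k = b) :
    ∃ s : ℕ, w.Blk b s F ∧ s * Real.exp (b * t) ≤ c := by
  induction h with
  | zero h0 hF => exact ⟨0, Wt.blk_zero hF, by simpa using h0⟩
  | blk hk hF h0 =>
    obtain rfl := hP _ hk
    exact ⟨_, hF, h0⟩
  | ext T _ _ h0 ih1 ih2 =>
    obtain ⟨s, hs, hs'⟩ := ih1
    obtain ⟨r, hr, hr'⟩ := ih2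
    obtain ⟨i, p, θ, T⟩ := T
    obtain ⟨e⟩ := T.split (w.orth (Wt.blk_ge hr) (w.le_shift 1 (Wt.blk_le hs)) (by omega) _)
    refine ⟨s + r, Wt.blk_iso (Wt.blk_biprod hs hr) e.symm, ?_⟩
    push_cast
    linarith

theorem Approx.ge_cocone {K F U : C} {k : K ⟶ F} {φ : F ⟶ U} {d : U ⟶ K⟦(1 : ℤ)⟧}
    (T : Tri k φ d) (h : Approx w m φ) : w.Ge (m - 1) K := by
  refine w.ge_of fun Z hZ x => ?_
  obtain ⟨y, rfl⟩ := T.fac6 x (h.inj (Wt.le_shift' hZ 1 (by omega)) _ (by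
    rw [← Category.assoc, T.z23, zero_comp]))
  obtain ⟨y', rfl⟩ := h.surj (w.le_mono hZ (by omega)) y
  rw [← Category.assoc, T.z12, zero_comp]

theorem CoApprox.le_cone {K F U : C} {k : K ⟶ F} {φ : F ⟶ U} {d : U ⟶ K⟦(1 : ℤ)⟧}
    (T : Tri k φ d) (h : CoApprox w m k) : w.Le (m + 1) U := by
  refine w.le_of fun X hX x => ?_
  obtain ⟨y, rfl⟩ := T.fac3 x (h.shift.inj (w.ge_mono hX (by omega)) _ (by
    rw [Category.assoc, T.z31, comp_zero]))
  obtain ⟨y', rfl⟩ := h.surj (w.ge_mono hX (by omega)) y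
  rw [Category.assoc, T.z12, comp_zero]

end Truncation

end CatEnt

namespace CatEnt

/-! ### Filtrations of retracts, ordered by weight -/

section Tower

variable {C : Type u} [Category.{v} C] [Preadditive C] [HasZeroObject C]
  [HasShift C ℤ] [∀ n : ℤ, (shiftFunctor C n).Additive] [Pretriangulated C]
  [HasFiniteBiproducts C] (w : Wt C) (t : ℝ)

/-- `N` is a retract of an object built at cost `c`. -/
def RBuilt (c : ℝ) (N : C) : Prop :=
  ∃ F : C, Nonempty (Retract N F) ∧ Built w t Set.univ c F

variable {w t} {a b m : ℤ} {c : ℝ}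

/-- For `t ≥ 0` the top weight of a retract of a built object can be split off without
increasing the cost of what remains: the remaining part is a retract of the lower truncation
plus a copy, shifted down, of the top piece. -/
theorem top_peel (ht : 0 ≤ t) {N : C} (hb : w.Ge b N) (ha : w.Le a N) (hN : RBuilt w t c N) :
    ∃ (N' R : C) (s : ℕ), DTri N' N R ∧ w.Blk b s R ∧ s * Real.exp (b * t) ≤ c ∧
      w.Ge (b - 1) N' ∧ w.Le a N' ∧ RBuilt w t c N' := by
  obtain ⟨F, ⟨r⟩, hF⟩ := hN
  obtain ⟨Z, hZ⟩ := HasZeroObject.zero (C := C)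
  have hZB : RBuilt w t c Z := ⟨Z, ⟨Retract.refl Z⟩, .zero hF.nonneg hZ⟩
  rcases lt_or_ge b a with hab | hab
  · have hN0 := Wt.isZero_of_lt hb ha hab
    exact ⟨Z, N, 0, dtri_right (Iso.refl N) hZ, Wt.blk_zero hN0, by simpa using hF.nonneg,
      Wt.ge_zero hZ, Wt.le_zero hZ, hZB⟩
  obtain ⟨c1, c2, hc, T0, U0, τ, -, hτ, hT0, -, hU0⟩ := hF.trunc (b + 1)
  obtain ⟨u, hu⟩ := hτ.surj (w.ge_mono hb (by omega)) r.i
  have hur : u ≫ τ ≫ r.r = 𝟙 N := by rw [← Category.assoc, ← hu, r.retract]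
  obtain ⟨ρ, hρ⟩ : ∃ ρ : T0 ⟶ N, u ≫ ρ = 𝟙 N := ⟨_, hur⟩
  obtain ⟨c3, c4, hc', T', R, τ', φ, hτ', hT', hφ, hR⟩ := hT0.trunc b
  obtain ⟨s, hs, hsc⟩ := hR.pure (b := b) (by
    rintro k ⟨⟨-, h1⟩, h2⟩
    simp only [Set.mem_Iio, Set.mem_Ici] at h1 h2
    omega)
  have hc1 := hU0.nonneg
  have hc3 := hT'.nonneg
  have hc4 := hR.nonneg
  rcases hab.eq_or_lt with rfl | hab
  · obtain ⟨y, hy⟩ := hφ.surj ha ρ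
    refine ⟨Z, N, s, dtri_right (Iso.refl N) hZ, Wt.blk_retract hs ⟨u ≫ φ, y, ?_⟩,
      by linarith, Wt.ge_zero hZ, Wt.le_zero hZ, hZB⟩
    rw [Category.assoc, ← hy, hρ]
  obtain ⟨N', f, h, T⟩ := exists_cocone (u ≫ φ)
  have hN'g : w.Ge (b - 1) N' := by
    refine w.ge_of fun Z hZ x => ?_
    obtain ⟨y, rfl⟩ := T.fac6 x (w.orth (Wt.blk_ge hs) (Wt.le_shift' hZ 1 rfl) (by omega) _)
    obtain ⟨y', hy'⟩ := hφ.surj (w.le_mono hZ (by omega)) (ρ ≫ y)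
    rw [← Category.id_comp y, ← hρ, Category.assoc, hy', ← Category.assoc u, ← Category.assoc f,
      T.z12, zero_comp]
  refine ⟨N', R, s, T.dtri, hs, by linarith, hN'g, ?_, ?_⟩
  · exact Wt.le_ext T.dtri.inv_rot
      (w.le_mono (Wt.le_shift' (Wt.blk_le hs) (-1) rfl) (by omega)) ha
  · obtain ⟨y, hy⟩ := hτ'.surj hN'g (f ≫ u)
    obtain ⟨z, hz⟩ := T.fac1 (τ' ≫ ρ) (w.orth hτ'.ge (Wt.blk_le hs) (by omega) _)
    obtain ⟨k, l, T2⟩ := T.exists_inv_rot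
    obtain ⟨l', hl'⟩ := T2.fac1 (𝟙 N' - y ≫ z) (by
      rw [Preadditive.sub_comp, Category.assoc, ← hz, ← Category.assoc, ← hy, Category.assoc, hρ,
        Category.comp_id, Category.id_comp, sub_self])
    refine ⟨_, retract_biprod y z l' k (by rw [← hl']; abel), ?_⟩
    refine ((hT'.mono (Set.subset_univ _) le_rfl).biprod
      ((hR.mono (Set.subset_univ _) le_rfl).shift (-1))).mono (Set.subset_univ _) ?_
    have : Real.exp (((-1 : ℤ) : ℝ) * t) ≤ 1 := by
      rw [Real.exp_le_one_iff]; push_cast; linarith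
    nlinarith

/-- For `t ≤ 0` the bottom weight of a retract of a built object can be split off without
increasing the cost of what remains. -/
theorem bot_peel (ht : t ≤ 0) {N : C} (hb : w.Ge b N) (ha : w.Le m N) (hN : RBuilt w t c N) :
    ∃ (R M : C) (s : ℕ), DTri R N M ∧ w.Blk m s R ∧ s * Real.exp (m * t) ≤ c ∧
      w.Ge b M ∧ w.Le (m + 1) M ∧ RBuilt w t c M := by
  obtain ⟨F, ⟨r⟩, hF⟩ := hN
  obtain ⟨Z, hZ⟩ := HasZeroObject.zero (C := C)
  have hZB : RBuilt w t c Z := ⟨Z, ⟨Retract.refl Z⟩, .zero hF.nonneg hZ⟩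
  rcases lt_or_ge b m with hab | hab
  · have hN0 := Wt.isZero_of_lt hb ha hab
    exact ⟨N, Z, 0, dtri_left (Iso.refl N) hZ, Wt.blk_zero hN0, by simpa using hF.nonneg,
      Wt.ge_zero hZ, Wt.le_zero hZ, hZB⟩
  obtain ⟨c2, c1, hc, T0, U0, -, τ, -, hT0, hτ, hU0⟩ := hF.trunc m
  obtain ⟨ρ, hρ'⟩ := hτ.surj ha r.r
  obtain ⟨u, hρ⟩ : ∃ u : N ⟶ U0, u ≫ ρ = 𝟙 N :=
    ⟨r.i ≫ τ, by rw [Category.assoc, ← hρ', r.retract]⟩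
  obtain ⟨c4, c3, hc', R, U', τ', φ, hτ', hR, hφ, hU'⟩ := hU0.trunc (m + 1)
  obtain ⟨s, hs, hsc⟩ := hR.pure (b := m) (by
    rintro k ⟨⟨-, h1⟩, h2⟩
    simp only [Set.mem_Iio, Set.mem_Ici] at h1 h2
    omega)
  have hc1 := hT0.nonneg
  have hc3 := hU'.nonneg
  have hc4 := hR.nonneg
  rcases hab.eq_or_lt with rfl | hab
  · obtain ⟨y, hy⟩ := hτ'.surj (w.ge_mono hb (by omega)) u
    refine ⟨N, Z, s, dtri_left (Iso.refl N) hZ, Wt.blk_retract hs ⟨y, τ' ≫ ρ, ?_⟩,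
      by linarith, Wt.ge_zero hZ, Wt.le_zero hZ, hZB⟩
    rw [← Category.assoc, ← hy, hρ]
  obtain ⟨M, f, h, T⟩ := exists_cone (τ' ≫ ρ)
  have hMl : w.Le (m + 1) M := by
    refine w.le_of fun X hX x => ?_
    obtain ⟨y, rfl⟩ := T.fac3 x (w.orth hX (Wt.le_shift' (Wt.blk_le hs) 1 rfl) (by omega) _)
    obtain ⟨y', hy'⟩ := hτ'.surj (w.ge_mono hX (by omega)) (y ≫ u)
    rw [← Category.comp_id y, ← hρ, ← Category.assoc y, hy', Category.assoc y', Category.assoc,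
      T.z12, comp_zero]
  refine ⟨R, M, s, T.dtri, hs, by linarith, ?_, hMl, ?_⟩
  · exact Wt.ge_ext T.dtri.rot hb
      (w.ge_mono (Wt.ge_shift' (Wt.blk_ge hs) 1 rfl) (by omega))
  · obtain ⟨z, hz⟩ := hφ.surj hMl (ρ ≫ f)
    obtain ⟨y, hy⟩ := T.fac2 (u ≫ φ) (w.orth (Wt.blk_ge hs) hφ.le (by omega) _)
    obtain ⟨l, hl⟩ := T.fac4 (𝟙 M - y ≫ z) (by
      rw [Preadditive.comp_sub, ← Category.assoc, ← hy, Category.assoc, ← hz, ← Category.assoc,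
        hρ, Category.comp_id, Category.id_comp, sub_self])
    refine ⟨_, retract_biprod y z h l (by rw [← hl]; abel), ?_⟩
    refine ((hU'.mono (Set.subset_univ _) le_rfl).biprod
      ((hR.mono (Set.subset_univ _) le_rfl).shift 1)).mono (Set.subset_univ _) ?_
    have : Real.exp (((1 : ℤ) : ℝ) * t) ≤ 1 := by
      rw [Real.exp_le_one_iff]; push_cast; linarith
    nlinarith

variable (w t a c)

/-- `Tow w t a c n E`: the object `E` has a filtration with pure factors of the consecutive
weights `a, a + 1, …, a + n - 1`, each of cost at most `c`. -/
inductive Tow : ℕ → C → Prop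
  | zero {E : C} : IsZero E → Tow 0 E
  | succ {n s : ℕ} {E' E X : C} : Tow n E' → DTri E' E X → w.Blk (a + n) s X →
      s * Real.exp (((a + n : ℤ) : ℝ) * t) ≤ c → Tow (n + 1) E

variable {w t a c}

theorem Tow.iso {n : ℕ} {E E' : C} (h : Tow w t a c n E) (e : E ≅ E') : Tow w t a c n E' := by
  cases h with
  | zero h => exact .zero (h.of_iso e.symm)
  | succ h T hX hc => exact .succ h (T.iso (Iso.refl _) e (Iso.refl _)) hX hc

theorem Tow.mono {n : ℕ} {E : C} {c' : ℝ} (h : Tow w t a c n E) (hc : c ≤ c') :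
    Tow w t a c' n E := by
  induction h with
  | zero h => exact .zero h
  | succ _ T hX h0 ih => exact .succ ih T hX (h0.trans hc)

theorem Tow.built {n : ℕ} {E : C} (h : Tow w t a c n E) : Built w t Set.univ (n * c) E := by
  induction h with
  | zero h => exact .zero (by simp) h
  | succ _ T hX h0 ih =>
    exact .ext T ih (.blk (Set.mem_univ _) hX h0) (by push_cast; linarith)

theorem Tow.exists_le {n : ℕ} {E : C} (h : Tow w t a c n E) (hE : ¬ IsZero E) :
    ∃ i < n, Real.exp (((a + i : ℤ) : ℝ) * t) ≤ c := by
  induction h with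
  | zero h => exact absurd h hE
  | @succ n s E' E X _ T hX h0 ih =>
    by_cases hE' : IsZero E'
    · refine ⟨n, by omega, le_trans ?_ h0⟩
      have hs : s ≠ 0 := by
        rintro rfl
        exact hE (T.zero2 hE' (Wt.isZero_of_blk hX))
      have : (1 : ℝ) ≤ s := by exact_mod_cast Nat.one_le_iff_ne_zero.2 hs
      exact le_mul_of_one_le_left (Real.exp_nonneg _) this
    · obtain ⟨i, hi, h⟩ := ih hE'
      exact ⟨i, by omega, h⟩

theorem tow_of_nonneg (ht : 0 ≤ t) (n : ℕ) {E : C} (hb : w.Ge (a + n - 1) E) (ha : w.Le a E)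
    (hE : RBuilt w t c E) : Tow w t a c n E := by
  induction n generalizing E with
  | zero => exact .zero (Wt.isZero_of_lt hb ha (by push_cast; omega))
  | succ n ih =>
    have hb' : w.Ge (a + n) E := by
      convert hb using 1; push_cast; ring
    obtain ⟨N', R, s, T, hR, hs, h1, h2, h3⟩ := top_peel ht hb' ha hE
    exact .succ (ih h1 h2 h3) T hR hs

/-- One step in converting a filtration obtained by splitting off bottom weights into one
obtained by splitting off top weights. If `f : E ⟶ N` is a truncation at `m` with fibre `K`, and
`P` is the fibre of the next truncation, then the cone of `K ⟶ P` is pure. It need not be the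
bottom piece of `N` itself because the octahedral axiom is not available; but it is a retract of
that piece plus a shift of the next one. -/
theorem tower_step (ht : t ≤ 0) {E N K : C} {k : K ⟶ E} {f : E ⟶ N} {d : N ⟶ K⟦(1 : ℤ)⟧}
    (T : Tri k f d) (hf : Approx w m f) (hb : w.Ge b N) (hN : RBuilt w t c N) :
    ∃ (M P V : C) (p : P ⟶ E) (f' : E ⟶ M) (d' : M ⟶ P⟦(1 : ℤ)⟧) (s : ℕ), Tri p f' d' ∧
      Approx w (m + 1) f' ∧ w.Ge b M ∧ RBuilt w t c M ∧ DTri K P V ∧ w.Blk m s V ∧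
      s * Real.exp (m * t) ≤ (1 + Real.exp (-t)) * c := by
  obtain ⟨L, M, s, ⟨ι, g, h, TN⟩, hL, hs, hMb, hMl, hMB⟩ := bot_peel ht hb hf.le hN
  obtain ⟨S, M2, s2, ⟨ι2, g2, h2, TM⟩, hS, hs2, -, hM2, -⟩ := bot_peel ht hMb hMl hMB
  have hfg : Approx w (m + 1) (f ≫ g) := by
    refine ⟨hMl, ?_, ?_⟩
    · intro Z hZ x
      obtain ⟨y, rfl⟩ := hf.surj (w.le_mono hZ (by omega)) x
      obtain ⟨y', rfl⟩ := TN.fac2 y (w.orth (Wt.blk_ge hL) hZ (by omega) _)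
      exact ⟨y', (Category.assoc _ _ _).symm⟩
    · intro Z hZ y hy
      have := hf.inj (w.le_mono hZ (by omega)) (g ≫ y) (by rw [← Category.assoc, hy])
      obtain ⟨l, rfl⟩ := TN.fac4 y this
      rw [w.orth (Wt.ge_shift' (Wt.blk_ge hL) 1 rfl) hZ (by omega) l, comp_zero]
  obtain ⟨P, p, d', TP⟩ := exists_cocone (f ≫ g)
  obtain ⟨kk, hkk⟩ := TP.fac1 k (by rw [← Category.assoc, T.z12, zero_comp])
  obtain ⟨V, v, dV, TV⟩ := exists_cone kk
  obtain ⟨κ, hκ1, hκ2⟩ := TV.complete3 T (𝟙 K) p (by rw [← hkk, Category.id_comp])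
  rw [CategoryTheory.Functor.map_id, Category.comp_id] at hκ2
  have hVg : w.Ge m V := by
    refine Wt.ge_ext TV.dtri.rot ?_ ?_
    · exact w.ge_mono (hfg.ge_cocone TP) (by omega)
    · exact Wt.ge_shift' (hf.ge_cocone T) 1 (by omega)
  obtain ⟨μ, hμ⟩ := TN.fac1 κ (w.orth hVg hMl (by omega) _)
  obtain ⟨l, hl⟩ := TV.fac5 (ι ≫ d) (by
    obtain ⟨y, hy⟩ := TP.fac5 ((ι ≫ d) ≫ kk⟦(1 : ℤ)⟧') (by
      rw [Category.assoc, ← Functor.map_comp, ← hkk, Category.assoc, T.z31, comp_zero])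
    rw [hy, w.orth (Wt.blk_ge hL) hMl (by omega) y, zero_comp])
  obtain ⟨x', hx'⟩ := T.fac3 (ι - l ≫ κ) (by
    rw [Preadditive.sub_comp, Category.assoc, ← hκ2, hl, sub_self])
  obtain ⟨x, rfl⟩ := TP.fac1 x' (by
    rw [← Category.assoc, ← hx', Preadditive.sub_comp, Category.assoc, hμ, Category.assoc,
      TN.z12, comp_zero, comp_zero, sub_self])
  obtain ⟨l', hl'⟩ : ∃ l' : L ⟶ V, l' ≫ κ = ι := by
    refine ⟨l + x ≫ v, ?_⟩
    rw [Preadditive.add_comp, Category.assoc, hκ1, ← Category.assoc, ← hx']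
    abel
  have hz : (𝟙 V - μ ≫ l') ≫ κ = 0 := by
    rw [Preadditive.sub_comp, Category.assoc, hl', ← hμ, Category.id_comp, sub_self]
  obtain ⟨w2, hw2⟩ := TV.fac3 (𝟙 V - μ ≫ l') (by rw [hκ2, ← Category.assoc, hz, zero_comp])
  obtain ⟨q, hq⟩ := T.fac1 (w2 ≫ p) (by
    rw [Category.assoc, ← hκ1, ← Category.assoc, ← hw2, hz])
  obtain ⟨y, hy⟩ := TP.fac7 (w2 - q ≫ kk) (by
    rw [Preadditive.sub_comp, hq, Category.assoc, ← hkk, sub_self])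
  obtain ⟨y', rfl⟩ := TM.fac1 y (w.orth (Wt.ge_shift' hVg 1 rfl) hM2 (by omega) _)
  obtain ⟨r⟩ := retract_biprod (μ⟦(1 : ℤ)⟧') (l'⟦(1 : ℤ)⟧') y' (ι2 ≫ d' ≫ v⟦(1 : ℤ)⟧') (by
    have : 𝟙 V - μ ≫ l' = (w2 - q ≫ kk) ≫ v := by
      rw [Preadditive.sub_comp, Category.assoc, TV.z12, comp_zero, sub_zero, hw2]
    have h3 := congrArg (fun z => (shiftFunctor C (1 : ℤ)).map z) this
    simp only [Functor.map_comp, hy, Functor.map_sub, CategoryTheory.Functor.map_id,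
      Category.assoc] at h3
    rw [← h3]
    abel)
  have hV1 := Wt.blk_retract (Wt.blk_biprod (Wt.blk_shift' hL 1 rfl) hS) r
  obtain ⟨e⟩ := shCancel V 1 (-1) (by omega)
  refine ⟨M, P, V, p, f ≫ g, d', s + s2, TP, hfg, hMb, hMB, TV.dtri,
    Wt.blk_iso (Wt.blk_shift' hV1 (-1) (by omega)) e, ?_⟩
  have h4 : Real.exp (m * t) = Real.exp (-t) * Real.exp (((m + 1 : ℤ) : ℝ) * t) := by
    rw [← Real.exp_add]; congr 1; push_cast; ring
  have h5 : (s2 : ℝ) * Real.exp (m * t) ≤ Real.exp (-t) * c := by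
    rw [h4, mul_left_comm]
    gcongr
  push_cast
  linarith

theorem tow_of_nonpos (ht : t ≤ 0) (n : ℕ) {E : C} (hb : w.Ge (a + n - 1) E) (ha : w.Le a E)
    (hE : RBuilt w t c E) : Tow w t a ((1 + Real.exp (-t)) * c) n E := by
  have key : ∀ j : ℕ, ∃ (N K : C) (k : K ⟶ E) (f : E ⟶ N) (d : N ⟶ K⟦(1 : ℤ)⟧), Tri k f d ∧
      Approx w (a + j) f ∧ w.Ge (a + n - 1) N ∧ RBuilt w t c N ∧
      Tow w t a ((1 + Real.exp (-t)) * c) j K := by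
    intro j
    induction j with
    | zero =>
      obtain ⟨K, k, d, T⟩ := exists_cocone (𝟙 E)
      refine ⟨E, K, k, 𝟙 E, d, T, .id (by simpa using ha), hb, hE, .zero ?_⟩
      exact Triangle.isZero₁_of_isIso₂ _ T (inferInstanceAs (IsIso (𝟙 E)))
    | succ j ih =>
      obtain ⟨N, K, k, f, d, T, hf, hNb, hN, hK⟩ := ih
      obtain ⟨M, P, V, p, f', d', s, TP, hf', hMb, hM, TV, hV, hs⟩ := tower_step ht T hf hNb hN
      exact ⟨M, P, p, f', d', TP, by convert hf' using 1; push_cast; ring, hMb, hM,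
        .succ hK TV hV hs⟩
  obtain ⟨N, K, k, f, d, T, hf, hNb, hN, hK⟩ := key n
  obtain ⟨e⟩ := T.dtri.iso_of_left (Wt.isZero_of_lt hNb hf.le (by omega))
  exact hK.iso e

/-- A retract of an object of cost `c` has a filtration ordered by weight, each factor of which
costs at most a constant times `c`. -/
theorem RBuilt.tow {n : ℕ} {E : C} (hE : RBuilt w t c E) (hb : w.Ge (a + n - 1) E)
    (ha : w.Le a E) : Tow w t a ((1 + Real.exp |t|) * c) n E := by
  have hc : 0 ≤ c := by
    obtain ⟨F, -, hF⟩ := hE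
    exact hF.nonneg
  rcases le_total 0 t with ht | ht
  · refine (tow_of_nonneg ht n hb ha hE).mono ?_
    have := Real.exp_pos |t|
    nlinarith
  · rw [abs_of_nonpos ht]
    exact tow_of_nonpos ht n hb ha hE

end Tower

end CatEnt

namespace CatEnt

/-! ### Filtrations and towers -/

section Filtration

variable {C : Type u} [Category.{v} C] [Preadditive C] [HasZeroObject C]
  [HasShift C ℤ] [∀ n : ℤ, (shiftFunctor C n).Additive] [Pretriangulated C]
  [HasFiniteBiproducts C]

theorem filt_zero {F : C} {X : Fin 0 → C} : HasFiltrationIn C Set.univ F X ↔ IsZero F := by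
  constructor
  · rintro ⟨A, hA, ⟨e⟩, -, -⟩
    exact hA.of_iso e.symm
  · intro h
    exact ⟨fun _ => F, h, ⟨Iso.refl _⟩, fun _ => Set.mem_univ _, fun i => i.elim0⟩

theorem filt_succ {m : ℕ} {F : C} {X : Fin (m + 1) → C} :
    HasFiltrationIn C Set.univ F X ↔ ∃ A : C,
      HasFiltrationIn C Set.univ A (fun i : Fin m => X i.castSucc) ∧ DTri A F (X (Fin.last m)) := by
  constructor
  · rintro ⟨A, hA, ⟨e⟩, -, hT⟩
    refine ⟨A (Fin.last m).castSucc, ⟨fun i => A i.castSucc, hA, ⟨Iso.refl _⟩,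
      fun _ => Set.mem_univ _, fun i => hT i.castSucc⟩, ?_⟩
    have h : DTri (A (Fin.last m).castSucc) (A (Fin.last m).succ) (X (Fin.last m)) :=
      hT (Fin.last m)
    exact h.iso (Iso.refl _) e (Iso.refl _)
  · rintro ⟨A, ⟨B, hB, ⟨e⟩, -, hT⟩, T⟩
    refine ⟨Fin.snoc (α := fun _ => C) B F, ?_, ⟨eqToIso (by simp)⟩, fun _ => Set.mem_univ _, ?_⟩
    · have : (Fin.snoc (α := fun _ => C) B F : Fin (m + 2) → C) (Fin.castSucc 0) = B 0 :=
        Fin.snoc_castSucc (α := fun _ => C) F B 0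
      rw [Fin.castSucc_zero] at this
      rwa [this]
    · intro i
      change DTri _ _ _
      refine Fin.lastCases ?_ (fun j => ?_) i
      · rw [Fin.succ_last, Fin.snoc_last, Fin.snoc_castSucc]
        exact T.iso e.symm (Iso.refl _) (Iso.refl _)
      · rw [Fin.succ_castSucc, Fin.snoc_castSucc, Fin.snoc_castSucc]
        exact hT j

variable {w : Wt C} {t : ℝ}

theorem built_of_filt {m : ℕ} {F : C} {X : Fin m → C} {c : Fin m → ℝ}
    (h : HasFiltrationIn C Set.univ F X) (hX : ∀ i, Built w t Set.univ (c i) (X i)) :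
    Built w t Set.univ (∑ i, c i) F := by
  induction m generalizing F with
  | zero => exact .zero (by simp) (filt_zero.1 h)
  | succ m ih =>
    obtain ⟨A, hA, T⟩ := filt_succ.1 h
    exact .ext T (ih hA fun i => hX i.castSucc) (hX _) (by rw [Fin.sum_univ_castSucc])

/-- A tower is a filtration whose factors have consecutive weights. -/
theorem Tow.filt {a : ℤ} {c : ℝ} {n : ℕ} {E : C} (h : Tow w t a c n E) :
    ∃ (X : Fin n → C) (s : Fin n → ℕ), (∀ i, X i ∈ w.H) ∧
      (∀ i, HasSummandCountIn C w.H (X i) (s i)) ∧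
      (∀ i : Fin n, (s i : ℝ) * Real.exp (((a + (i : ℕ) : ℤ) : ℝ) * t) ≤ c) ∧
      HasFiltrationIn C Set.univ E (fun i : Fin n => (X i)⟦(a + (i : ℕ) : ℤ)⟧) := by
  induction h with
  | zero h =>
    exact ⟨fun i => i.elim0, fun i => i.elim0, fun i => i.elim0, fun i => i.elim0,
      fun i => i.elim0, filt_zero.2 h⟩
  | @succ n s E' E Y _ T hY h0 ih =>
    obtain ⟨X, r, hX, hr, hc, hF⟩ := ih
    obtain ⟨Z, s', hZ, hs', hle, ⟨e⟩⟩ := hY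
    refine ⟨Fin.snoc (α := fun _ => C) X Z, Fin.snoc (α := fun _ => ℕ) r s', ?_, ?_, ?_,
      filt_succ.2 ⟨E', ?_, ?_⟩⟩
    · exact Fin.lastCases (by rwa [Fin.snoc_last]) (fun j => by rw [Fin.snoc_castSucc]; exact hX j)
    · exact Fin.lastCases (by rwa [Fin.snoc_last, Fin.snoc_last])
        (fun j => by rw [Fin.snoc_castSucc, Fin.snoc_castSucc]; exact hr j)
    · refine Fin.lastCases ?_ (fun j => ?_)
      · rw [Fin.snoc_last, Fin.val_last]
        refine le_trans ?_ h0
        gcongr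
      · rw [Fin.snoc_castSucc]; exact hc j
    · simpa only [Fin.snoc_castSucc, Fin.val_castSucc] using hF
    · simp only [Fin.snoc_last, Fin.val_last]
      exact T.iso (Iso.refl _) (Iso.refl _) e

theorem Tow.coComplexity_le {a : ℤ} {c : ℝ} {n : ℕ} {E : C} (h : Tow w t a c n E) :
    coComplexity C w.H t E ≤ ENNReal.ofReal (n * c) := by
  obtain ⟨X, s, hX, hs, hc, hF⟩ := h.filt
  refine le_trans (b := ENNReal.ofReal (∑ i : Fin n, (s i : ℝ) *
    Real.exp (((a + (i : ℕ) : ℤ) : ℝ) * t))) (sInf_le ?_) (ENNReal.ofReal_le_ofReal ?_)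
  · refine ⟨n, fun i => (a + (i : ℕ) : ℤ), X, s, ?_, hX, hs, hF, rfl⟩
    intro i j hij
    have : (i : ℕ) < j := hij
    simp only
    omega
  · calc _ ≤ ∑ _i : Fin n, c := Finset.sum_le_sum fun i _ => hc i
      _ = n * c := by simp

/-- Every co-t-filtration exhibits the object as built from pure pieces at the same cost. -/
theorem le_coComplexity {F : C} {x : ℝ≥0∞}
    (h : ∀ c : ℝ, 0 ≤ c → Built w t Set.univ c F → x ≤ ENNReal.ofReal c) :
    x ≤ coComplexity C w.H t F := by
  refine le_sInf ?_
  rintro _ ⟨m, k, X, s, -, hX, hs, hF, rfl⟩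
  have hb := built_of_filt (w := w) (t := t) (c := fun i => (s i : ℝ) * Real.exp ((k i : ℝ) * t)) hF
    (fun i => .blk (Set.mem_univ (k i)) ⟨X i, s i, hX i, hs i, le_rfl, ⟨Iso.refl _⟩⟩ le_rfl)
  exact h _ hb.nonneg hb

theorem exists_built_aux (w : Wt C) (t : ℝ) (n : ℕ) : ∀ (a : ℤ) (E : C), w.Ge (a + n - 1) E →
    w.Le a E → ∃ c : ℝ, Built w t {k | a ≤ k ∧ k ≤ a + n - 1} c E := by
  induction n with
  | zero =>
    intro a E h1 h2
    exact ⟨0, .zero le_rfl (Wt.isZero_of_lt h1 h2 (by push_cast; omega))⟩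
  | succ n ih =>
    intro a E h1 h2
    rcases n with - | n
    · obtain ⟨s, hs⟩ := Wt.exists_blk (w.ge_mono h1 (b := a) (by push_cast; omega)) h2
      exact ⟨_, .blk (k := a) (by constructor <;> push_cast <;> omega) hs le_rfl⟩
    · obtain ⟨X, A, T, hX, hA⟩ := w.trunc E (a + 1)
      obtain ⟨s, hs⟩ := Wt.exists_blk (w.ge_mono hX (b := a) (by omega))
        (Wt.le_ext T.inv_rot (Wt.le_shift' hA (-1) (by omega)) h2)
      obtain ⟨c, hc⟩ := ih (a + 1) A (Wt.ge_ext T.rot (w.ge_mono h1 (by push_cast; omega))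
        (Wt.ge_shift' (b := a + 1 + (n + 1 : ℕ) - 1) (w.ge_mono hX (b := a + n) (by omega)) 1
          (by push_cast; omega))) hA
      exact ⟨_, .ext T (.blk (k := a) (by constructor <;> push_cast <;> omega) hs le_rfl)
        (hc.mono (fun k hk => by
          obtain ⟨h1, h2⟩ := hk
          constructor <;> push_cast at * <;> omega) le_rfl) le_rfl⟩

theorem exists_built (w : Wt C) (t : ℝ) {a b : ℤ} {E : C} (h1 : w.Ge b E) (h2 : w.Le a E) :
    ∃ c : ℝ, Built w t (Set.Icc a b) c E := by
  rcases lt_or_ge b a with h | h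
  · exact ⟨0, .zero le_rfl (Wt.isZero_of_lt h1 h2 h)⟩
  · obtain ⟨n, hn⟩ : ∃ n : ℕ, b = a + n - 1 := ⟨(b - a + 1).toNat, by omega⟩
    subst hn
    exact exists_built_aux w t n a E h1 h2

end Filtration

end CatEnt

namespace CatEnt

/-! ### Exact functors and the growth of the iterates on the co-heart -/

section Exactness

variable {C : Type u} [Category.{v} C] [Preadditive C] [HasZeroObject C]
  [HasShift C ℤ] [∀ n : ℤ, (shiftFunctor C n).Additive] [Pretriangulated C]
  [HasFiniteBiproducts C]

/-- The part of exactness of an endofunctor that concerns objects only; in this form it is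
inherited by composites without any bookkeeping of commutation isomorphisms. -/
structure Exactish (Ψ : C ⥤ C) : Prop where
  tri : ∀ {A B X : C}, DTri A B X → DTri (Ψ.obj A) (Ψ.obj B) (Ψ.obj X)
  zero : ∀ {X : C}, IsZero X → IsZero (Ψ.obj X)
  shift : ∀ (X : C) (k : ℤ), Nonempty (Ψ.obj (X⟦k⟧) ≅ (Ψ.obj X)⟦k⟧)

theorem exactish_of_isTriangulated (Φ : C ⥤ C) [Φ.CommShift ℤ] [Φ.IsTriangulated] :
    Exactish Φ where
  tri := by
    rintro A B X ⟨f, g, h, T⟩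
    exact ⟨_, _, _, Φ.map_distinguished _ T⟩
  zero h := Functor.map_isZero Φ h
  shift X k := ⟨(Φ.commShiftIso k).app X⟩

variable {Φ Ψ : C ⥤ C}

theorem Exactish.iter (hΦ : Exactish Φ) (N : ℕ) : Exactish (iter Φ N) := by
  induction N with
  | zero => exact ⟨fun h => h, fun h => h, fun X k => ⟨Iso.refl _⟩⟩
  | succ N ih =>
    refine ⟨fun h => hΦ.tri (ih.tri h), fun h => hΦ.zero (ih.zero h), fun X k => ?_⟩
    obtain ⟨e⟩ := ih.shift X k
    obtain ⟨e'⟩ := hΦ.shift ((CatEnt.iter Φ N).obj X) k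
    exact ⟨Φ.mapIso e ≪≫ e'⟩

theorem iter_add_obj (Φ : C ⥤ C) (M N : ℕ) (X : C) :
    (iter Φ (M + N)).obj X = (iter Φ N).obj ((iter Φ M).obj X) := by
  induction N with
  | zero => rfl
  | succ N ih => exact congrArg Φ.obj ih

variable {w : Wt C} {t : ℝ} {P : Set ℤ}

theorem Exactish.built_blk (hΨ : Exactish Ψ) {c : ℝ} (hc : 0 ≤ c)
    (hM : ∀ i, Built w t Set.univ c (Ψ.obj (w.M i))) {k : ℤ} {s : ℕ} :
    ∀ {F : C}, w.Blk k s F → Built w t Set.univ (s * Real.exp (k * t) * c) (Ψ.obj F) := by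
  induction s with
  | zero => exact fun h => .zero (by simp) (hΨ.zero (Wt.isZero_of_blk h))
  | succ s ih =>
    intro F h
    rcases Wt.blk_succ h with h | ⟨F', i, h, ⟨e⟩⟩
    · refine (ih h).mono subset_rfl ?_
      gcongr
      omega
    · obtain ⟨e'⟩ := hΨ.shift (w.M i) k
      have T : DTri F' F ((w.M i)⟦k⟧) := (dtri_biprod _ _).iso (Iso.refl _) e.symm (Iso.refl _)
      refine .ext (hΨ.tri T) (ih h) (((hM i).shift k).iso e'.symm) ?_
      push_cast
      linarith

/-- Costs multiply under substitution. -/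
theorem Exactish.built (hΨ : Exactish Ψ) {c c' : ℝ} (hc : 0 ≤ c)
    (hM : ∀ i, Built w t Set.univ c (Ψ.obj (w.M i))) {F : C} (hF : Built w t P c' F) :
    Built w t Set.univ (c' * c) (Ψ.obj F) := by
  induction hF with
  | zero h0 h => exact .zero (by positivity) (hΨ.zero h)
  | blk _ h h0 => exact (hΨ.built_blk hc hM h).mono subset_rfl (by gcongr)
  | ext T _ _ h0 h1 h2 =>
    refine .ext (hΨ.tri T) h1 h2 ?_
    rw [← add_mul]
    gcongr

/-- A property closed under extensions that holds for the images of the relevant shifts of the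
indecomposables holds for the image of every built object. -/
theorem Exactish.built_ind (hΨ : Exactish Ψ) (R : C → Prop) (hz : ∀ {X : C}, IsZero X → R X)
    (hi : ∀ {X Y : C}, (X ≅ Y) → R X → R Y) (hext : ∀ {A B X : C}, DTri A B X → R A → R X → R B)
    (hM : ∀ k ∈ P, ∀ i, R ((Ψ.obj (w.M i))⟦k⟧)) {c : ℝ} {F : C}
    (hF : Built w t P c F) : R (Ψ.obj F) := by
  induction hF with
  | zero _ h => exact hz (hΨ.zero h)
  | @blk c k s F hk h _ =>
    induction s generalizing F with
    | zero => exact hz (hΨ.zero (Wt.isZero_of_blk h))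
    | succ s ih =>
      have hs : (s : ℝ) * Real.exp (k * t) ≤ c := by
        refine le_trans ?_ ‹_›
        gcongr
        omega
      rcases Wt.blk_succ h with h | ⟨F', i, h, ⟨e⟩⟩
      · exact ih h hs
      · obtain ⟨e'⟩ := hΨ.shift (w.M i) k
        have T : DTri F' F ((w.M i)⟦k⟧) := (dtri_biprod _ _).iso (Iso.refl _) e.symm (Iso.refl _)
        exact hext (hΨ.tri T) (ih h hs) (hi e'.symm (hM k hk i))
  | ext T _ _ _ h1 h2 => exact hext (hΨ.tri T) h1 h2

/-- An exact functor has bounded weight amplitude, as there are finitely many indecomposables. -/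
theorem Exactish.exists_amplitude (w : Wt C) (hΨ : Exactish Ψ) : ∃ d : ℕ, ∀ {a b : ℤ} {E : C},
    w.Ge b E → w.Le a E → w.Ge (b + d) (Ψ.obj E) ∧ w.Le (a - d) (Ψ.obj E) := by
  have h : ∀ i, ∃ d : ℕ, w.Ge d (Ψ.obj (w.M i)) ∧ w.Le (-d : ℤ) (Ψ.obj (w.M i)) := by
    intro i
    obtain ⟨a, b, hb, ha⟩ := w.bdd (Ψ.obj (w.M i))
    exact ⟨b.natAbs + a.natAbs, w.ge_mono hb (by omega), w.le_mono ha (by omega)⟩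
  choose d hd using h
  have hle : ∀ i, d i ≤ ∑ j, d j := fun i =>
    Finset.single_le_sum (f := d) (fun _ _ => Nat.zero_le _) (Finset.mem_univ i)
  refine ⟨∑ i, d i, fun {a b E} hb ha => ?_⟩
  obtain ⟨c, hc⟩ := exists_built w 0 hb ha
  constructor
  · refine hΨ.built_ind (fun X => w.Ge (b + (∑ i, d i : ℕ)) X) Wt.ge_zero
      (fun e h => Wt.ge_iso h e) Wt.ge_ext (fun k hk i => ?_) hc
    refine w.ge_mono (w.ge_shift k (hd i).1) ?_
    have := hle i
    have := hk.2
    omega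
  · refine hΨ.built_ind (fun X => w.Le (a - (∑ i, d i : ℕ)) X) Wt.le_zero
      (fun e h => Wt.le_iso h e) Wt.le_ext (fun k hk i => ?_) hc
    refine w.le_mono (w.le_shift k (hd i).2) ?_
    have := hle i
    have := hk.1
    omega

theorem exists_amplitude_iter (w : Wt C) (hΦ : Exactish Φ) : ∃ d : ℕ, ∀ (N : ℕ) {a b : ℤ} {E : C},
    w.Ge b E → w.Le a E → w.Ge (b + N * d) ((iter Φ N).obj E) ∧
      w.Le (a - N * d) ((iter Φ N).obj E) := by
  obtain ⟨d, hd⟩ := hΦ.exists_amplitude w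
  refine ⟨d, fun N a b E hb ha => ?_⟩
  induction N with
  | zero => exact ⟨w.ge_mono hb (by simp), w.le_mono ha (by simp)⟩
  | succ N ih =>
    obtain ⟨h1, h2⟩ := hd ih.1 ih.2
    exact ⟨w.ge_mono h1 (by push_cast; linarith), w.le_mono h2 (by push_cast; linarith)⟩

end Exactness

section Growth

variable {C : Type u} [Category.{v} C] [Preadditive C] [HasZeroObject C]
  [HasShift C ℤ] [∀ n : ℤ, (shiftFunctor C n).Additive] [Pretriangulated C]
  [HasFiniteBiproducts C] (w : Wt C) (t : ℝ) (Φ : C ⥤ C)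

/-- The costs at which the images under `Φ ^ N` of all indecomposables of the co-heart can be
built. -/
def costs (N : ℕ) : Set ℝ :=
  {c | 0 ≤ c ∧ ∀ i, Built w t Set.univ c ((iter Φ N).obj (w.M i))}

/-- The infimum of the costs at which the images under `Φ ^ N` of all indecomposables of the
co-heart can be built. -/
noncomputable def growth (N : ℕ) : ℝ := sInf (costs w t Φ N)

variable {w t Φ} {c : ℝ} {N : ℕ}

theorem costs_bddBelow : BddBelow (costs w t Φ N) := ⟨0, fun _ h => h.1⟩

theorem costs_nonempty : (costs w t Φ N).Nonempty := by
  have h : ∀ i, ∃ c : ℝ, Built w t Set.univ c ((iter Φ N).obj (w.M i)) := by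
    intro i
    obtain ⟨a, b, hb, ha⟩ := w.bdd ((iter Φ N).obj (w.M i))
    obtain ⟨c, hc⟩ := exists_built w t hb ha
    exact ⟨c, hc.mono (Set.subset_univ _) le_rfl⟩
  choose c hc using h
  refine ⟨∑ i, c i, Finset.sum_nonneg fun i _ => (hc i).nonneg, fun i =>
    (hc i).mono subset_rfl (Finset.single_le_sum (fun j _ => (hc j).nonneg) (Finset.mem_univ i))⟩

theorem growth_nonneg : 0 ≤ growth w t Φ N := Real.sInf_nonneg fun _ h => h.1

theorem mem_costs (h : growth w t Φ N < c) : c ∈ costs w t Φ N := by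
  obtain ⟨c', hc', hlt⟩ := exists_lt_of_csInf_lt costs_nonempty h
  exact ⟨growth_nonneg.trans h.le, fun i => (hc'.2 i).mono subset_rfl hlt.le⟩

theorem growth_le (h : c ∈ costs w t Φ N) : growth w t Φ N ≤ c := csInf_le costs_bddBelow h

theorem growth_add (hΦ : Exactish Φ) (M N : ℕ) :
    growth w t Φ (M + N) ≤ growth w t Φ M * growth w t Φ N := by
  have key : ∀ c ∈ costs w t Φ M, ∀ c' ∈ costs w t Φ N, growth w t Φ (M + N) ≤ c * c' := by
    intro c hc c' hc'
    refine growth_le ⟨mul_nonneg hc.1 hc'.1, fun i => ?_⟩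
    rw [iter_add_obj]
    exact (hΦ.iter N).built hc'.1 hc'.2 (hc.2 i)
  have h : ∀ ε : ℝ, 0 < ε →
      growth w t Φ (M + N) ≤ (growth w t Φ M + ε) * (growth w t Φ N + ε) := fun ε hε =>
    key _ (mem_costs (by linarith)) _ (mem_costs (by linarith))
  have hlim : Tendsto (fun ε : ℝ => (growth w t Φ M + ε) * (growth w t Φ N + ε))
      (nhdsWithin 0 (Set.Ioi 0)) (nhds ((growth w t Φ M + 0) * (growth w t Φ N + 0))) := by
    refine Tendsto.mono_left (Continuous.tendsto ?_ 0) nhdsWithin_le_nhds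
    fun_prop
  simp only [add_zero] at hlim
  exact ge_of_tendsto hlim (eventually_nhdsWithin_of_forall fun ε hε => h ε hε)

theorem exists_iter_M_ne_zero (hΦ : Exactish Φ) (h0 : PowersNonzeroOn C Set.univ Φ) (N : ℕ) :
    ∃ i, ¬ IsZero ((iter Φ N).obj (w.M i)) := by
  by_contra! h
  have hall : ∀ X, IsZero ((iter Φ N).obj X) := by
    intro X
    obtain ⟨a, b, hb, ha⟩ := w.bdd X
    obtain ⟨c, hc⟩ := exists_built w 0 hb ha
    exact (hΦ.iter N).built_ind (fun X => IsZero X) (fun h => h) (fun e h => h.of_iso e.symm)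
      DTri.zero2 (fun k _ i => IsZero.shift (h i) k) hc
  obtain ⟨X, -, hX⟩ := h0 (N + 1) (by omega)
  exact hX (hΦ.zero (hall X))

/-- The growth is at least exponential in `-N`, as the weights of `Φ ^ N` of an indecomposable
are `O(N)`. -/
theorem exists_growth_lower (hΦ : Exactish Φ) (h0 : PowersNonzeroOn C Set.univ Φ) :
    ∃ d : ℝ, 0 ≤ d ∧ ∀ N : ℕ, Real.exp (-(d * N)) / (1 + Real.exp |t|) ≤ growth w t Φ N := by
  obtain ⟨d, hd⟩ := exists_amplitude_iter w hΦ
  refine ⟨d * |t|, by positivity, fun N => le_csInf costs_nonempty fun c hc => ?_⟩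
  obtain ⟨i, hi⟩ := exists_iter_M_ne_zero (w := w) hΦ h0 N
  obtain ⟨h1, h2⟩ := hd N (Wt.blk_ge (Wt.blk_M i)) (Wt.blk_le (Wt.blk_M i))
  have hT : Tow w t (-(N * d : ℕ)) ((1 + Real.exp |t|) * c) (2 * (N * d) + 1)
      ((iter Φ N).obj (w.M i)) :=
    RBuilt.tow ⟨_, ⟨Retract.refl _⟩, hc.2 i⟩ (w.ge_mono h1 (by push_cast; linarith))
      (w.le_mono h2 (by push_cast; linarith))
  obtain ⟨j, hj, hle⟩ := hT.exists_le hi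
  rw [div_le_iff₀' (by positivity)]
  refine le_trans (Real.exp_le_exp.2 ?_) hle
  have hj' : |((-(N * d : ℕ) + (j : ℤ) : ℤ) : ℝ)| ≤ N * d := by
    rw [abs_le]
    have h3 : (j : ℝ) < 2 * (N * d) + 1 := by exact_mod_cast hj
    have h4 : (j : ℝ) ≤ 2 * (N * d) := by exact_mod_cast Nat.le_of_lt_succ hj
    have h5 : (0 : ℝ) ≤ j := by positivity
    push_cast
    constructor <;> linarith
  have := neg_abs_le (((-(N * d : ℕ) + (j : ℤ) : ℤ) : ℝ) * t)
  rw [abs_mul] at this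
  nlinarith [mul_le_mul_of_nonneg_right hj' (abs_nonneg t)]

theorem growth_pos (hΦ : Exactish Φ) (h0 : PowersNonzeroOn C Set.univ Φ) (N : ℕ) :
    0 < growth w t Φ N := by
  obtain ⟨d, -, hd⟩ := exists_growth_lower (w := w) (t := t) hΦ h0
  exact lt_of_lt_of_le (by positivity) (hd N)

theorem exists_growth_limit (hΦ : Exactish Φ) (h0 : PowersNonzeroOn C Set.univ Φ) :
    ∃ L : ℝ, Tendsto (fun N : ℕ => Real.log (growth w t Φ N) / N) atTop (nhds L) := by
  have hsub : Subadditive fun N => Real.log (growth w t Φ N) := by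
    intro M N
    rw [← Real.log_mul (growth_pos hΦ h0 M).ne' (growth_pos hΦ h0 N).ne']
    exact Real.log_le_log (growth_pos hΦ h0 _) (growth_add hΦ M N)
  refine ⟨_, hsub.tendsto_lim ?_⟩
  obtain ⟨d, hd0, hd⟩ := exists_growth_lower (w := w) (t := t) hΦ h0
  have hp : (0 : ℝ) ≤ Real.log (1 + Real.exp |t|) :=
    Real.log_nonneg (by linarith [Real.exp_pos |t|])
  refine ⟨-d - Real.log (1 + Real.exp |t|), ?_⟩
  rintro _ ⟨N, rfl⟩
  rcases Nat.eq_zero_or_pos N with rfl | hN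
  · simp only [Nat.cast_zero, div_zero]
    linarith
  · have h1 : (1 : ℝ) ≤ N := by exact_mod_cast hN
    have := Real.log_le_log (by positivity) (hd N)
    rw [Real.log_div (by positivity) (by positivity), Real.log_exp] at this
    simp only
    rw [le_div_iff₀ (by linarith)]
    nlinarith

end Growth

end CatEnt

namespace CatEnt

/-! ### Complexity with respect to a split-generator -/

section Sums

variable {C : Type u} [Category.{v} C] [Preadditive C] [HasZeroObject C]
  [HasShift C ℤ] [∀ n : ℤ, (shiftFunctor C n).Additive] [Pretriangulated C]
  [HasFiniteBiproducts C]

/-- The sum of a distinguished triangle and the contractible triangle on `X`. -/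
theorem DTri.biprod_left {A B W : C} (T : DTri A B W) (X : C) : DTri (X ⊞ A) (X ⊞ B) W := by
  obtain ⟨f, p, θ, T⟩ := T
  obtain ⟨W', q, η, T'⟩ := exists_cone (biprod.map (𝟙 X) f)
  obtain ⟨x, hx1, hx2⟩ := T.complete3 T' biprod.inr biprod.inr (by simp)
  obtain ⟨y, hy1, hy2⟩ := T'.complete3 T biprod.snd biprod.snd (by simp)
  have hxy : IsIso (x ≫ y) := by
    refine isIso₃_of_isIso₁₂ (T := Triangle.mk f p θ) (T' := Triangle.mk f p θ)
      ⟨𝟙 A, 𝟙 B, x ≫ y, ?_, ?_, ?_⟩ T T (show IsIso (𝟙 A) from inferInstance)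
      (show IsIso (𝟙 B) from inferInstance)
    · change f ≫ 𝟙 B = 𝟙 A ≫ f
      simp
    · change p ≫ x ≫ y = 𝟙 B ≫ p
      rw [← Category.assoc, hx1, Category.assoc, hy1, ← Category.assoc, biprod.inr_snd]
    · change θ ≫ (𝟙 A)⟦(1 : ℤ)⟧' = (x ≫ y) ≫ θ
      rw [Category.assoc, ← hy2, ← Category.assoc, ← hx2, Category.assoc, ← Functor.map_comp,
        biprod.inr_snd]
  have hη : η = y ≫ θ ≫ (biprod.inr : A ⟶ X ⊞ A)⟦(1 : ℤ)⟧' := by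
    have h0 : η ≫ (biprod.fst : X ⊞ A ⟶ X)⟦(1 : ℤ)⟧' = 0 := by
      have : (biprod.fst : X ⊞ A ⟶ X) = biprod.map (𝟙 X) f ≫ biprod.fst := by simp
      rw [this, Functor.map_comp, ← Category.assoc, T'.z31, zero_comp]
    have h1 : η = η ≫ (𝟙 (X ⊞ A))⟦(1 : ℤ)⟧' := by simp
    rw [h1, ← biprod.total, Functor.map_add, Functor.map_comp, Functor.map_comp,
      Preadditive.comp_add, ← Category.assoc, h0, zero_comp, zero_add, ← Category.assoc, hy2,
      Category.assoc]
  have : IsSplitMono x := ⟨⟨⟨y ≫ inv (x ≫ y), by rw [← Category.assoc, IsIso.hom_inv_id]⟩⟩⟩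
  have : Epi x := by
    refine Preadditive.epi_of_cancel_zero x fun z hz => ?_
    obtain ⟨z', hz'⟩ := T'.fac4 z (by
      apply biprod.hom_ext'
      · have : (biprod.inl : X ⟶ X ⊞ B) = biprod.inl ≫ biprod.map (𝟙 X) f := by simp
        rw [this, Category.assoc, ← Category.assoc _ q, T'.z12, zero_comp, comp_zero, comp_zero]
      · rw [← Category.assoc, ← hx1, Category.assoc, hz, comp_zero, comp_zero])
    rw [hη, Category.assoc] at hz'
    have : (θ ≫ (biprod.inr : A ⟶ X ⊞ A)⟦(1 : ℤ)⟧') ≫ z' = 0 := by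
      rw [← cancel_epi (x ≫ y), comp_zero, Category.assoc, ← hz', hz]
    rw [hz', this, comp_zero]
  have : IsIso x := isIso_of_epi_of_isSplitMono x
  exact T'.dtri.iso (Iso.refl _) (Iso.refl _) (asIso x).symm

/-- If the outer vertices of a triangle are retracts of `X` and `C'`, then the middle vertex is a
retract of an extension of `C'` by `X`. -/
theorem Tri.retract_mid {A B W X C' : C} {f : A ⟶ B} {p : B ⟶ W} {θ : W ⟶ A⟦(1 : ℤ)⟧}
    (T : Tri f p θ) (r : Retract A X) (r' : Retract W C') :
    ∃ B' : C, DTri X B' C' ∧ Nonempty (Retract B B') := by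
  obtain ⟨B', f', p', T'⟩ := exists_mid (r'.r ≫ θ ≫ r.i⟦(1 : ℤ)⟧')
  obtain ⟨b, hb1, hb2⟩ := T.complete2 T' r.i r'.i (by
    rw [← Category.assoc, r'.retract, Category.id_comp])
  obtain ⟨b', hb1', hb2'⟩ := T'.complete2 T r.r r'.r (by
    rw [Category.assoc, Category.assoc, ← Functor.map_comp, r.retract, CategoryTheory.Functor.map_id,
      Category.comp_id])
  have : IsIso (b ≫ b') := T.isIso2 T (𝟙 A) (b ≫ b') (𝟙 W)
    (by rw [← Category.assoc, hb1, Category.assoc, hb1', ← Category.assoc, r.retract])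
    (by rw [Category.assoc, ← hb2', ← Category.assoc b, ← hb2, Category.assoc, r'.retract])
    (by simp)
  exact ⟨B', T'.dtri, ⟨⟨b, b' ≫ inv (b ≫ b'), by rw [← Category.assoc, IsIso.hom_inv_id]⟩⟩⟩

end Sums

section Linear

variable {C : Type u} [Category.{v} C] [Preadditive C] [HasZeroObject C]
  [HasShift C ℤ] [∀ n : ℤ, (shiftFunctor C n).Additive] [Pretriangulated C]
  [HasFiniteBiproducts C] (G : C) (t : ℝ)

/-- `GLin G t c X`: the object `X` has a filtration by shifts of `G` of cost at most `c`. -/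
inductive GLin : ℝ → C → Prop
  | zero {c : ℝ} {X : C} : 0 ≤ c → IsZero X → GLin c X
  | cons {c' c : ℝ} {k : ℤ} {A B W : C} : DTri A B W → Nonempty (W ≅ G⟦k⟧) → GLin c' A →
      c' + Real.exp (k * t) ≤ c → GLin c B

/-- `RG G t c X`: the object `X` is a retract of an object filtered by shifts of `G` at cost at
most `c`. -/
def RG (c : ℝ) (X : C) : Prop := ∃ Y : C, Nonempty (Retract X Y) ∧ GLin G t c Y

variable {G t} {c c' : ℝ}

theorem GLin.nonneg {X : C} (h : GLin G t c X) : 0 ≤ c := by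
  induction h with
  | zero h _ => exact h
  | cons _ _ _ h ih => exact le_trans (by positivity) h

theorem GLin.mono {X : C} (h : GLin G t c X) (hc : c ≤ c') : GLin G t c' X := by
  cases h with
  | zero h0 hX => exact .zero (h0.trans hc) hX
  | cons T e hA h0 => exact .cons T e hA (h0.trans hc)

theorem GLin.iso {X Y : C} (h : GLin G t c X) (e : X ≅ Y) : GLin G t c Y := by
  cases h with
  | zero h0 hX => exact .zero h0 (hX.of_iso e.symm)
  | cons T e' hA h0 => exact .cons (T.iso (Iso.refl _) e (Iso.refl _)) e' hA h0

theorem GLin.of_filt {m : ℕ} {k : Fin m → ℤ} {F : C}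
    (h : HasFiltrationIn C Set.univ F (fun i => G⟦k i⟧)) :
    GLin G t (∑ i, Real.exp (k i * t)) F := by
  induction m generalizing F with
  | zero => exact .zero (by simp) (filt_zero.1 h)
  | succ m ih =>
    obtain ⟨A, hA, T⟩ := filt_succ.1 h
    exact .cons T ⟨Iso.refl _⟩ (ih hA) (by rw [Fin.sum_univ_castSucc])

theorem GLin.filt {F : C} (h : GLin G t c F) : ∃ (m : ℕ) (k : Fin m → ℤ),
    HasFiltrationIn C Set.univ F (fun i => G⟦k i⟧) ∧ ∑ i, Real.exp (k i * t) ≤ c := by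
  induction h with
  | zero h0 hF => exact ⟨0, fun i => i.elim0, filt_zero.2 hF, by simpa using h0⟩
  | @cons c' c k A B W T e _ h0 ih =>
    obtain ⟨m, l, hA, hl⟩ := ih
    obtain ⟨e⟩ := e
    refine ⟨m + 1, Fin.snoc (α := fun _ => ℤ) l k, filt_succ.2 ⟨A, ?_, ?_⟩, ?_⟩
    · simpa only [Fin.snoc_castSucc] using hA
    · simp only [Fin.snoc_last]
      exact T.iso (Iso.refl _) (Iso.refl _) e
    · rw [Fin.sum_univ_castSucc]
      simp only [Fin.snoc_castSucc, Fin.snoc_last]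
      linarith

theorem GLin.biprod {X Y : C} (hX : GLin G t c X) (hY : GLin G t c' Y) (k : ℤ) :
    GLin G t (c + c' * Real.exp (k * t)) (X ⊞ Y⟦k⟧) := by
  induction hY with
  | @zero c' Y h0 hY =>
    obtain ⟨e⟩ := (dtri_biprod X (Y⟦k⟧)).iso_of_left (IsZero.shift hY k)
    exact (hX.iso e).mono (by linarith [mul_nonneg h0 (Real.exp_pos (k * t)).le])
  | @cons c₁ c₂ l A B W T e _ h0 ih =>
    obtain ⟨e⟩ := e
    obtain ⟨e'⟩ := shAdd G l k (l + k) rfl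
    refine .cons (DTri.biprod_left (T.shift k) X) ⟨(shiftFunctor C k).mapIso e ≪≫ e'⟩ ih ?_
    push_cast
    rw [add_mul, Real.exp_add]
    nlinarith [mul_le_mul_of_nonneg_right h0 (Real.exp_pos (k * t)).le]

theorem RG.nonneg {X : C} (h : RG G t c X) : 0 ≤ c := by
  obtain ⟨Y, -, h⟩ := h
  exact h.nonneg

theorem RG.mono {X : C} (h : RG G t c X) (hc : c ≤ c') : RG G t c' X := by
  obtain ⟨Y, r, h⟩ := h
  exact ⟨Y, r, h.mono hc⟩

theorem RG.retract {X Y : C} (h : RG G t c X) (r : Retract Y X) : RG G t c Y := by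
  obtain ⟨Z, ⟨r'⟩, h⟩ := h
  exact ⟨Z, ⟨r.trans r'⟩, h⟩

theorem RG.complexity_le {X : C} (h : RG G t c X) : complexity C t G X ≤ ENNReal.ofReal c := by
  obtain ⟨Y, ⟨r⟩, h⟩ := h
  obtain ⟨Q, ⟨e⟩⟩ := Retract.exists_biprod r
  obtain ⟨m, k, hF, hk⟩ := (h.iso e).filt
  exact le_trans (sInf_le ⟨m, k, Q, Set.mem_univ _, hF, rfl⟩) (ENNReal.ofReal_le_ofReal hk)

/-- Along a triangle `A ⟶ B ⟶ C'` and a map `j : D⟦k⟧ ⟶ C'` with `D` filtered by shifts of `G`,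
the map `A ⟶ B` factors through an object, filtered by shifts of `G`, in which the composite of
`j` with the connecting map dies. The cells of `D⟦k⟧` are killed one after the other; a cell may
not be killed compatibly with the map to `B` on the nose, and the obstruction comes from the
previous stage `D₀⟦k⟧` of the filtration of `D⟦k⟧`, which is why that stage is added as a
summand. -/
theorem GLin.kill {D : C} (hD : GLin G t c' D) : ∃ K : ℝ, 0 ≤ K ∧ ∀ (k : ℤ) {A B C' : C}
    {i : A ⟶ B} {p : B ⟶ C'} {θ : C' ⟶ A⟦(1 : ℤ)⟧} (_ : Tri i p θ) (j : D⟦k⟧ ⟶ C') {c : ℝ}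
    (_ : GLin G t c A), ∃ (X : C) (a : A ⟶ X) (γ : X ⟶ B),
      GLin G t (c + K * Real.exp (k * t)) X ∧ a ≫ γ = i ∧ j ≫ θ ≫ a⟦(1 : ℤ)⟧' = 0 := by
  induction hD with
  | zero _ hD =>
    refine ⟨0, le_rfl, fun k A B C' i p θ T j c hA => ⟨A, 𝟙 A, i, hA.mono (by simp), by simp, ?_⟩⟩
    exact (IsZero.shift hD k).eq_of_src _ _
  | @cons c₁ c₂ l D₀ D W TD e hD₀ h0 ih =>
    obtain ⟨K, hK, ih⟩ := ih
    refine ⟨K + c₁ + Real.exp (l * t), by linarith [hD₀.nonneg, Real.exp_pos (l * t)],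
      fun k A B C' i p θ T j c hA => ?_⟩
    obtain ⟨u, e', d, TD⟩ := TD.shift k
    obtain ⟨X₀, a₀, γ₀, hX₀, hγ₀, hj⟩ := ih k T (u ≫ j) hA
    obtain ⟨g, hg⟩ := TD.fac2 (j ≫ θ ≫ a₀⟦(1 : ℤ)⟧') (by simpa only [Category.assoc] using hj)
    obtain ⟨ω', hω'⟩ := TD.fac4 (g ≫ γ₀⟦(1 : ℤ)⟧') (by
      rw [← Category.assoc, ← hg, Category.assoc, Category.assoc, ← Functor.map_comp, hγ₀, T.z31,
        comp_zero])
    obtain ⟨ω, rfl⟩ := (shiftFunctor C (1 : ℤ)).map_surjective ω'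
    obtain ⟨X, f, q, TX⟩ := exists_mid
      (g ≫ (biprod.inl : X₀ ⟶ X₀ ⊞ D₀⟦k⟧)⟦(1 : ℤ)⟧' -
        d ≫ (biprod.inr : D₀⟦k⟧ ⟶ X₀ ⊞ D₀⟦k⟧)⟦(1 : ℤ)⟧')
    obtain ⟨γ, hγ⟩ := TX.fac6 (biprod.desc γ₀ ω) (by
      rw [Preadditive.sub_comp, Category.assoc, Category.assoc, ← Functor.map_comp,
        ← Functor.map_comp, biprod.inl_desc, biprod.inr_desc, hω', sub_self])
    refine ⟨X, a₀ ≫ biprod.inl ≫ f, γ, ?_, ?_, ?_⟩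
    · obtain ⟨e⟩ := e
      obtain ⟨e'⟩ := shAdd G l k (l + k) rfl
      refine .cons TX.dtri ⟨(shiftFunctor C k).mapIso e ≪≫ e'⟩ (hX₀.biprod hD₀ k) ?_
      push_cast
      rw [add_mul (l : ℝ), Real.exp_add]
      linarith
    · rw [Category.assoc, Category.assoc, ← hγ, biprod.inl_desc, hγ₀]
    · have h1 : j ≫ θ ≫ (a₀ ≫ biprod.inl ≫ f)⟦(1 : ℤ)⟧' =
          (j ≫ θ ≫ a₀⟦(1 : ℤ)⟧') ≫ (biprod.inl : X₀ ⟶ X₀ ⊞ D₀⟦k⟧)⟦(1 : ℤ)⟧' ≫ f⟦(1 : ℤ)⟧' := by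
        simp only [Functor.map_comp, Category.assoc]
      have h2 : e' ≫ (g ≫ (biprod.inl : X₀ ⟶ X₀ ⊞ D₀⟦k⟧)⟦(1 : ℤ)⟧' -
          d ≫ (biprod.inr : D₀⟦k⟧ ⟶ X₀ ⊞ D₀⟦k⟧)⟦(1 : ℤ)⟧') =
          (e' ≫ g) ≫ (biprod.inl : X₀ ⟶ X₀ ⊞ D₀⟦k⟧)⟦(1 : ℤ)⟧' := by
        rw [Preadditive.comp_sub, ← Category.assoc e' d, TD.z23, zero_comp, sub_zero,
          Category.assoc]
      rw [h1, hg, ← Category.assoc, ← h2, Category.assoc, TX.z31, comp_zero]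

/-- Attaching a retract of a shift of a fixed filtered object costs a bounded multiple of the
expected amount. -/
theorem GLin.attach {D : C} (hD : GLin G t c' D) : ∃ K : ℝ, 0 ≤ K ∧ ∀ (k : ℤ) {A B W : C} {c : ℝ},
    DTri A B W → Nonempty (Retract W (D⟦k⟧)) → RG G t c A →
      RG G t (c + K * Real.exp (k * t)) B := by
  obtain ⟨K, hK, h⟩ := hD.kill
  refine ⟨K + c', by linarith [hD.nonneg], fun k A B W c T r hA => ?_⟩
  obtain ⟨f, p, θ, T⟩ := T
  obtain ⟨r⟩ := r
  obtain ⟨X, ⟨rX⟩, hX⟩ := hA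
  obtain ⟨B', ⟨f', p', θ', T'⟩, ⟨rB⟩⟩ := T.retract_mid rX r
  obtain ⟨Z, a, γ, hZ, haγ, hj⟩ := h k T' (𝟙 _) hX
  obtain ⟨r'⟩ := T'.retract_of_factor a γ haγ (by simpa using hj)
  exact ⟨_, ⟨rB.trans r'⟩, (hZ.biprod hD k).mono (by linarith)⟩

variable {w : Wt C}

theorem exists_glin (hG : IsSplitGenerator C G) (X : C) :
    ∃ (c : ℝ) (Q : C), GLin G t c (X ⊞ Q) := by
  obtain ⟨m, k, Q, -, h⟩ := hG.2 X (Set.mem_univ _)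
  exact ⟨_, Q, .of_filt h⟩

theorem exists_attach (w : Wt C) (t : ℝ) (hG : IsSplitGenerator C G) :
    ∃ K : ℝ, 0 ≤ K ∧ ∀ (i : Fin w.num) (k : ℤ) {A B : C} {c : ℝ}, DTri A B ((w.M i)⟦k⟧) →
      RG G t c A → RG G t (c + K * Real.exp (k * t)) B := by
  have h : ∀ i : Fin w.num, ∃ K : ℝ, 0 ≤ K ∧ ∀ (k : ℤ) {A B : C} {c : ℝ},
      DTri A B ((w.M i)⟦k⟧) → RG G t c A → RG G t (c + K * Real.exp (k * t)) B := by
    intro i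
    obtain ⟨c', Q, hQ⟩ := exists_glin (t := t) hG (w.M i)
    obtain ⟨K, hK, h⟩ := hQ.attach
    obtain ⟨r⟩ := retract_inl (w.M i) Q
    exact ⟨K, hK, fun k A B c T hA => h k T ⟨r.map (shiftFunctor C k)⟩ hA⟩
  choose K hK h using h
  refine ⟨∑ i, K i, Finset.sum_nonneg fun i _ => hK i, fun i k A B c T hA =>
    (h i k T hA).mono ?_⟩
  gcongr
  exact Finset.single_le_sum (fun j _ => hK j) (Finset.mem_univ i)

section Attach

variable {K : ℝ}

variable (w G t K) in
/-- Attaching a shift by `k` of an indecomposable of the co-heart costs at most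
`K * exp (k * t)`. -/
def AttachBound : Prop := ∀ (i : Fin w.num) (k : ℤ) {A B : C} {c : ℝ},
  DTri A B ((w.M i)⟦k⟧) → RG G t c A → RG G t (c + K * Real.exp (k * t)) B

theorem RG.biprod_blk (hK0 : 0 ≤ K) (hK : AttachBound G t w K)
    {k : ℤ} {s : ℕ} : ∀ {Z W : C} {c : ℝ}, RG G t c Z → w.Blk k s W →
    RG G t (c + s * K * Real.exp (k * t)) (Z ⊞ W) := by
  induction s with
  | zero =>
    intro Z W c hZ hW
    obtain ⟨e⟩ := (dtri_biprod Z W).iso_of_left (Wt.isZero_of_blk hW)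
    exact (hZ.retract (Retract.ofIso e.symm)).mono (by simp)
  | succ s ih =>
    intro Z W c hZ hW
    rcases Wt.blk_succ hW with h | ⟨W', i, h, ⟨e⟩⟩
    · refine (ih hZ h).mono ?_
      gcongr
      omega
    · have T : DTri W' W ((w.M i)⟦k⟧) := (dtri_biprod _ _).iso (Iso.refl _) e.symm (Iso.refl _)
      refine (hK i k (T.biprod_left Z) (ih hZ h)).mono ?_
      push_cast
      linarith

/-- A version of `GLin.kill` for pure objects, killing one indecomposable summand at a time. -/
theorem RG.kill_blk (hK0 : 0 ≤ K) (hK : AttachBound G t w K)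
    {k : ℤ} {s : ℕ} : ∀ {A B W : C} {f : A ⟶ B} {θ : W ⟶ A⟦(1 : ℤ)⟧} {c : ℝ},
    RG G t c A → w.Blk k s W → θ ≫ f⟦(1 : ℤ)⟧' = 0 → ∃ (Z : C) (z : A ⟶ Z) (γ : Z ⟶ B),
      RG G t (c + s * K * Real.exp (k * t)) Z ∧ z ≫ γ = f ∧ θ ≫ z⟦(1 : ℤ)⟧' = 0 := by
  induction s with
  | zero =>
    intro A B W f θ c hA hW _
    exact ⟨A, 𝟙 A, f, hA.mono (by simp), by simp, (Wt.isZero_of_blk hW).eq_of_src _ _⟩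
  | succ s ih =>
    intro A B W f θ c hA hW h0
    rcases Wt.blk_succ hW with h | ⟨W', i, h, ⟨e⟩⟩
    · obtain ⟨Z, z, γ, hZ, h1, h2⟩ := ih hA h h0
      refine ⟨Z, z, γ, hZ.mono ?_, h1, h2⟩
      gcongr
      omega
    · obtain ⟨Z', z', γ', hZ', h1, h2⟩ := ih (θ := biprod.inl ≫ e.inv ≫ θ) (f := f) hA h (by
        rw [Category.assoc, Category.assoc, h0, comp_zero, comp_zero])
      obtain ⟨Z, y, q, T⟩ := exists_mid
        ((biprod.inr : (w.M i)⟦k⟧ ⟶ W' ⊞ (w.M i)⟦k⟧) ≫ e.inv ≫ θ ≫ z'⟦(1 : ℤ)⟧')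
      obtain ⟨γ, hγ⟩ := T.fac6 γ' (by
        rw [Category.assoc, Category.assoc, Category.assoc, ← Functor.map_comp, h1, h0, comp_zero,
          comp_zero])
      refine ⟨Z, z' ≫ y, γ, (hK i k T.dtri hZ').mono (by push_cast; linarith), by
        rw [Category.assoc, ← hγ, h1], ?_⟩
      rw [← cancel_epi e.inv, comp_zero, Functor.map_comp]
      apply biprod.hom_ext'
      · have := congrArg (· ≫ y⟦(1 : ℤ)⟧') h2
        simpa only [Category.assoc, zero_comp, comp_zero] using this
      · simpa only [Category.assoc, comp_zero] using T.z31

theorem RG.attach_blk (hK0 : 0 ≤ K) (hK : AttachBound G t w K)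
    {k : ℤ} {s : ℕ} {A B W : C} {c : ℝ} (T : DTri A B W) (hA : RG G t c A)
    (hW : w.Blk k s W) : RG G t (c + 2 * K * (s * Real.exp (k * t))) B := by
  obtain ⟨f, p, θ, T⟩ := T
  obtain ⟨Z, z, γ, hZ, h1, h2⟩ := RG.kill_blk hK0 hK hA hW T.z31
  obtain ⟨r⟩ := T.retract_of_factor z γ h1 h2
  exact ((RG.biprod_blk hK0 hK hZ hW).retract r).mono (by linarith)

theorem RG.of_filt (hK0 : 0 ≤ K) (hK : AttachBound G t w K)
    {m : ℕ} {k : Fin m → ℤ} {s : Fin m → ℕ} {X : Fin m → C} {F : C}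
    (hX : ∀ i, w.Blk (k i) (s i) (X i)) (h : HasFiltrationIn C Set.univ F X) :
    RG G t (2 * K * ∑ i, (s i : ℝ) * Real.exp (k i * t)) F := by
  induction m generalizing F with
  | zero => exact ⟨F, ⟨Retract.refl F⟩, .zero (by simp) (filt_zero.1 h)⟩
  | succ m ih =>
    obtain ⟨A, hA, T⟩ := filt_succ.1 h
    refine (RG.attach_blk hK0 hK T (ih (fun i => hX i.castSucc) hA) (hX _)).mono ?_
    rw [Fin.sum_univ_castSucc, mul_add]

end Attach

theorem exists_complexity_le (w : Wt C) (t : ℝ) (hG : IsSplitGenerator C G) : ∃ K : ℝ, 0 ≤ K ∧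
    ∀ F : C, complexity C t G F ≤ ENNReal.ofReal K * coComplexity C w.H t F := by
  obtain ⟨K, hK0, hK⟩ := exists_attach w t hG
  refine ⟨2 * K + 1, by linarith, fun F => ?_⟩
  have hpos : ENNReal.ofReal (2 * K + 1) ≠ 0 := by
    rw [Ne, ENNReal.ofReal_eq_zero]; linarith
  rw [mul_comm, ← ENNReal.div_le_iff hpos ENNReal.ofReal_ne_top]
  refine le_sInf ?_
  rintro _ ⟨m, k, X, s, -, hX, hs, hF, rfl⟩
  rw [ENNReal.div_le_iff hpos ENNReal.ofReal_ne_top, mul_comm,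
    ← ENNReal.ofReal_mul (by linarith)]
  refine ((RG.of_filt (s := s) hK0 hK (fun i => ⟨X i, s i, hX i, hs i, le_rfl, ⟨Iso.refl _⟩⟩)
    hF).mono ?_).complexity_le
  gcongr
  linarith

end Linear

end CatEnt

namespace CatEnt

/-! ### Comparison of the exponential growth rates -/

section Comparison

variable {C : Type u} [Category.{v} C] [Preadditive C] [HasZeroObject C]
  [HasShift C ℤ] [∀ n : ℤ, (shiftFunctor C n).Additive] [Pretriangulated C]
  [HasFiniteBiproducts C] {w : Wt C} {t : ℝ} {Φ Ψ : C ⥤ C} {G : C}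

/-- Since the number of weights of `Φ ^ N E` grows at most linearly in `N`, passing from a retract
of a built object to a tower costs a factor that is linear in `N`. -/
theorem exists_tow (w : Wt C) (t : ℝ) (hΦ : Exactish Φ) (E : C) : ∃ κ : ℝ, 0 < κ ∧
    ∀ (N : ℕ) {c : ℝ}, RBuilt w t c ((iter Φ N).obj E) → ∃ (a : ℤ) (n : ℕ) (c' : ℝ),
      Tow w t a c' n ((iter Φ N).obj E) ∧ n * c' ≤ κ * (1 + N) * c := by
  obtain ⟨d, hd⟩ := exists_amplitude_iter w hΦ
  obtain ⟨a, b, hb, ha⟩ := w.bdd E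
  refine ⟨((b - a).natAbs + 1 + 2 * d : ℕ) * (1 + Real.exp |t|), by positivity, fun N c h => ?_⟩
  have hc : 0 ≤ c := by
    obtain ⟨F, -, hF⟩ := h
    exact hF.nonneg
  obtain ⟨h1, h2⟩ := hd N hb ha
  refine ⟨a - N * d, (b - a).natAbs + 1 + 2 * (N * d), _,
    h.tow (w.ge_mono h1 (by have := le_abs_self (b - a); push_cast; linarith)) h2, ?_⟩
  have : (((b - a).natAbs + 1 + 2 * (N * d) : ℕ) : ℝ) ≤
      ((b - a).natAbs + 1 + 2 * d : ℕ) * (1 + N) := by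
    norm_cast
    nlinarith [Nat.zero_le ((b - a).natAbs * N), Nat.zero_le d]
  calc _ ≤ ((b - a).natAbs + 1 + 2 * d : ℕ) * (1 + (N : ℝ)) * ((1 + Real.exp |t|) * c) := by
        gcongr
    _ = _ := by ring

theorem GLin.built (hΨ : Exactish Ψ) {g c : ℝ} {X : C} (hX : GLin G t g X)
    (hG : Built w t Set.univ c (Ψ.obj G)) : Built w t Set.univ (g * c) (Ψ.obj X) := by
  induction hX with
  | zero h0 h => exact .zero (mul_nonneg h0 hG.nonneg) (hΨ.zero h)
  | @cons g₁ g₂ k A B W T e _ h0 ih =>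
    obtain ⟨e⟩ := e
    obtain ⟨e'⟩ := hΨ.shift G k
    refine .ext (hΨ.tri T) ih ((hG.shift k).iso (e'.symm ≪≫ Ψ.mapIso e.symm)) ?_
    nlinarith [mul_le_mul_of_nonneg_right h0 hG.nonneg]

theorem le_mul_coComplexity {F : C} {x : ℝ≥0∞} {p : ℝ} (hp : 0 < p)
    (h : ∀ c : ℝ, Built w t Set.univ c F → x ≤ ENNReal.ofReal (p * c)) :
    x ≤ ENNReal.ofReal p * coComplexity C w.H t F := by
  have hpos : ENNReal.ofReal p ≠ 0 := by
    rw [Ne, ENNReal.ofReal_eq_zero]; linarith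
  rw [mul_comm, ← ENNReal.div_le_iff hpos ENNReal.ofReal_ne_top]
  refine le_coComplexity fun c _ hF => ?_
  rw [ENNReal.div_le_iff hpos ENNReal.ofReal_ne_top, mul_comm, ← ENNReal.ofReal_mul hp.le]
  exact h c hF

theorem coComplexity_iter_le (hΦ : Exactish Φ) (h0 : PowersNonzeroOn C Set.univ Φ) (E : C) :
    ∃ K : ℝ, 0 < K ∧ ∀ N : ℕ, coComplexity C w.H t ((iter Φ N).obj E) ≤
      ENNReal.ofReal (K * (1 + N) * growth w t Φ N) := by
  obtain ⟨κ, hκ, h⟩ := exists_tow w t hΦ E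
  obtain ⟨a, b, hb, ha⟩ := w.bdd E
  obtain ⟨c, hc⟩ := exists_built w t hb ha
  have hc0 := hc.nonneg
  refine ⟨2 * κ * (c + 1), by positivity, fun N => ?_⟩
  have hg := growth_pos (w := w) (t := t) hΦ h0 N
  -- The infimum defining the growth may not be attained, but twice its value is a cost.
  have hcost := mem_costs (w := w) (t := t) (Φ := Φ) (N := N) (c := 2 * growth w t Φ N)
    (by linarith)
  obtain ⟨a', n, c', hT, hle⟩ := h N
    ⟨_, ⟨Retract.refl _⟩, (hΦ.iter N).built hcost.1 hcost.2 hc⟩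
  refine hT.coComplexity_le.trans (ENNReal.ofReal_le_ofReal (hle.trans ?_))
  have : 0 ≤ κ * (1 + N) * growth w t Φ N := by positivity
  nlinarith

theorem growth_le_coComplexity (hΦ : Exactish Φ) (hG : IsSplitGenerator C G) :
    ∃ K : ℝ, 0 < K ∧ ∀ N : ℕ, ENNReal.ofReal (growth w t Φ N) ≤
      ENNReal.ofReal (K * (1 + N)) * coComplexity C w.H t ((iter Φ N).obj G) := by
  choose κ hκ h using fun i => exists_tow w t hΦ (w.M i)
  choose g Q hQ using fun i => exists_glin (t := t) hG (w.M i)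
  have hnn : ∀ i, 0 ≤ κ i * g i := fun i => mul_nonneg (hκ i).le (hQ i).nonneg
  refine ⟨∑ i, κ i * g i + 1, by linarith [Finset.sum_nonneg fun i (_ : i ∈ Finset.univ) => hnn i],
    fun N => ?_⟩
  have hsum : 0 ≤ ∑ i, κ i * g i := Finset.sum_nonneg fun i _ => hnn i
  refine le_mul_coComplexity (by positivity) fun c hc => ENNReal.ofReal_le_ofReal ?_
  have hc0 := hc.nonneg
  refine growth_le ⟨by positivity, fun i => ?_⟩
  obtain ⟨r⟩ := retract_inl (w.M i) (Q i)
  obtain ⟨a, n, c', hT, hle⟩ := h i N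
    ⟨_, ⟨r.map (iter Φ N)⟩, (hQ i).built (hΦ.iter N) hc⟩
  refine hT.built.mono subset_rfl (hle.trans ?_)
  calc κ i * (1 + N) * (g i * c) = κ i * g i * ((1 + N) * c) := by ring
    _ ≤ (∑ i, κ i * g i + 1) * ((1 + N) * c) := by
        gcongr
        linarith [Finset.single_le_sum (f := fun i => κ i * g i) (fun j _ => hnn j)
          (Finset.mem_univ i)]
    _ = _ := by ring

theorem coComplexity_le_complexity (w : Wt C) (t : ℝ) (hΦ : Exactish Φ) (E : C) :
    ∃ K : ℝ, 0 < K ∧ ∀ N : ℕ, coComplexity C w.H t ((iter Φ N).obj E) ≤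
      ENNReal.ofReal (K * (1 + N)) * complexity C t G ((iter Φ N).obj E) := by
  obtain ⟨κ, hκ, h⟩ := exists_tow w t hΦ E
  obtain ⟨a, b, hb, ha⟩ := w.bdd G
  obtain ⟨g, hg⟩ := exists_built w t hb ha
  have hg0 := hg.nonneg
  refine ⟨κ * (g + 1), by positivity, fun N => ?_⟩
  have hp : 0 < κ * (g + 1) * (1 + (N : ℝ)) := by positivity
  have hpos : ENNReal.ofReal (κ * (g + 1) * (1 + (N : ℝ))) ≠ 0 := by
    rw [Ne, ENNReal.ofReal_eq_zero]; linarith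
  rw [mul_comm, ← ENNReal.div_le_iff hpos ENNReal.ofReal_ne_top]
  refine le_sInf ?_
  rintro _ ⟨m, k, Q, -, hF, rfl⟩
  rw [ENNReal.div_le_iff hpos ENNReal.ofReal_ne_top, mul_comm, ← ENNReal.ofReal_mul hp.le]
  have hX := GLin.of_filt (t := t) hF
  have h1 : Exactish (𝟭 C) := ⟨fun h => h, fun h => h, fun X k => ⟨Iso.refl _⟩⟩
  obtain ⟨r⟩ := retract_inl ((iter Φ N).obj E) Q
  obtain ⟨a', n, c', hT, hle⟩ := h N
    ⟨_, ⟨r⟩, hX.built h1 (hg.mono (Set.subset_univ _) le_rfl)⟩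
  refine hT.coComplexity_le.trans (ENNReal.ofReal_le_ofReal (hle.trans ?_))
  have : 0 ≤ κ * (1 + (N : ℝ)) * ∑ i, Real.exp (k i * t) := mul_nonneg (by positivity) hX.nonneg
  nlinarith

end Comparison

section Limit

theorem tendsto_log_poly (K : ℝ) (hK : 0 < K) :
    Tendsto (fun N : ℕ => Real.log (K * (1 + N) ^ 2) / N) atTop (nhds 0) := by
  have h1 : Tendsto (fun N : ℕ => Real.log K / (N : ℝ)) atTop (nhds 0) :=
    tendsto_const_div_atTop_nhds_zero_nat _
  have h2 : Tendsto (fun N : ℕ => Real.log (1 + N) / (N : ℝ)) atTop (nhds 0) := by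
    have h3 : Tendsto (fun x : ℝ => Real.log x / (1 * x + (-1))) atTop (nhds 0) :=
      Real.tendsto_pow_log_div_mul_add_atTop 1 (-1) 1 one_ne_zero |>.congr (by simp)
    have h4 : Tendsto (fun N : ℕ => 1 + (N : ℝ)) atTop atTop :=
      tendsto_atTop_add_const_left _ _ tendsto_natCast_atTop_atTop
    exact (h3.comp h4).congr fun N => by simp
  have := h1.add (h2.const_mul 2)
  simp only [mul_zero, add_zero] at this
  refine this.congr fun N => ?_
  rw [Real.log_mul hK.ne' (by positivity), Real.log_pow]
  push_cast
  ring

/-- A sequence that agrees with `B` up to polynomial factors has the growth rate of `B`. -/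
theorem tendsto_entSeq {f : ℕ → ℝ≥0∞} {B : ℕ → ℝ} {L K K' : ℝ} (hB : ∀ N, 0 < B N)
    (hL : Tendsto (fun N : ℕ => Real.log (B N) / N) atTop (nhds L)) (hK : 0 < K) (hK' : 0 < K')
    (h1 : ∀ N : ℕ, ENNReal.ofReal (B N) ≤ ENNReal.ofReal (K * (1 + N) ^ 2) * f N)
    (h2 : ∀ N : ℕ, f N ≤ ENNReal.ofReal (K' * (1 + N) ^ 2 * B N)) :
    Tendsto (entSeq f) atTop (nhds (L : EReal)) := by
  have hf : ∀ N, ∃ y : ℝ, 0 < y ∧ f N = ENNReal.ofReal y := by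
    intro N
    have hne : f N ≠ ⊤ := ne_top_of_le_ne_top ENNReal.ofReal_ne_top (h2 N)
    have h0 : f N ≠ 0 := by
      intro h
      have := h1 N
      rw [h, mul_zero, nonpos_iff_eq_zero, ENNReal.ofReal_eq_zero] at this
      linarith [hB N]
    exact ⟨(f N).toReal, ENNReal.toReal_pos h0 hne, (ENNReal.ofReal_toReal hne).symm⟩
  choose y hy hfy using hf
  have e : entSeq f = fun N : ℕ => ((Real.log (y N) / N : ℝ) : EReal) := by
    funext N
    rw [entSeq, hfy, ENNReal.log_ofReal_of_pos (hy N), ← EReal.coe_mul, inv_mul_eq_div]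
  rw [e, EReal.tendsto_coe]
  refine tendsto_of_tendsto_of_tendsto_of_le_of_le
    (g := fun N : ℕ => Real.log (B N) / N - Real.log (K * (1 + N) ^ 2) / N)
    (h := fun N : ℕ => Real.log (K' * (1 + N) ^ 2) / N + Real.log (B N) / N) ?_ ?_ ?_ ?_
  · simpa using hL.sub (tendsto_log_poly K hK)
  · simpa using (tendsto_log_poly K' hK').add hL
  · intro N
    simp only
    have h := h1 N
    rw [hfy, ← ENNReal.ofReal_mul (by positivity), ENNReal.ofReal_le_ofReal_iff
      (mul_nonneg (by positivity) (hy N).le)] at h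
    have := Real.log_le_log (hB N) h
    rw [Real.log_mul (by positivity) (hy N).ne'] at this
    rw [← sub_div]
    gcongr
    linarith
  · intro N
    simp only
    have hb := hB N
    have h := h2 N
    rw [hfy, ENNReal.ofReal_le_ofReal_iff (by positivity)] at h
    have := Real.log_le_log (hy N) h
    rw [Real.log_mul (by positivity) hb.ne'] at this
    rw [← add_div]
    gcongr

theorem entSeq_mono {f g : ℕ → ℝ≥0∞} (h : ∀ N, f N ≤ g N) (N : ℕ) : entSeq f N ≤ entSeq g N :=
  mul_le_mul_of_nonneg_left (ENNReal.log_monotone (h N)) (by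
    rw [← EReal.coe_zero, EReal.coe_le_coe_iff]; positivity)

end Limit

end CatEnt

/-- for a bounded co-t-structure `𝔟 = (ge, le)` with finite co-heart
on a `K`-linear idempotent complete triangulated category `D` with a split-generator,
and an exact endofunctor `Φ` with `Φ^N ≇ 0` for all `N > 0`, for every `t` and every
split-generator `G` the limit `lim_N (1/N) log δ̌_t^𝔟(Φ^N G)` exists and
`h_t(Φ) = ȟ_t^𝔟(Φ) = lim_N (1/N) log δ̌_t^𝔟(Φ^N G)`; in particular `ȟ_t^𝔟(Φ)`
does not depend on the choice of `𝔟`. -/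
theorem entropy_eq_coEntropy
    (K : Type w) [Field K]
    (D : Type u) [Category.{v} D] [Preadditive D] [CategoryTheory.Linear K D]
    [HasZeroObject D] [HasShift D ℤ] [∀ n : ℤ, (shiftFunctor D n).Additive]
    [Pretriangulated D] [HasFiniteBiproducts D] [IsIdempotentComplete D]
    (ge le : Set D)
    (hco : IsCoTStructureIn D Set.univ ge le)
    (hbd : IsBoundedIn D Set.univ ge le)
    (hfin : FiniteCoheart D (coheart D ge le))
    (Φ : D ⥤ D) [Φ.CommShift ℤ] [Φ.IsTriangulated]
    (hΦ : PowersNonzeroOn D Set.univ Φ)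
    (G : D) (hG : IsSplitGenerator D G) (t : ℝ) :
    ∃ L : EReal,
      Filter.Tendsto
        (entSeq (fun N => coComplexity D (coheart D ge le) t ((iter Φ N).obj G)))
        Filter.atTop (nhds L) ∧
      entropy D Φ G t = L ∧
      coEntropyIn D Set.univ (coheart D ge le) Φ t = L := by
  obtain ⟨w, hw⟩ := exists_wt ge le hco hbd hfin
  rw [← hw]
  have hE := exactish_of_isTriangulated Φ
  obtain ⟨L, hL⟩ := exists_growth_limit (w := w) (t := t) hE hΦ
  have hB := growth_pos (w := w) (t := t) hE hΦ
  obtain ⟨K₁, hK₁, h₁⟩ := growth_le_coComplexity (w := w) (t := t) hE hG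
  obtain ⟨K₂, hK₂, h₂⟩ := coComplexity_iter_le (w := w) (t := t) hE hΦ G
  obtain ⟨K₃, hK₃, h₃⟩ := exists_complexity_le w t hG
  obtain ⟨K₄, hK₄, h₄⟩ := coComplexity_le_complexity (G := G) w t hE G
  have hsq : ∀ N : ℕ, 1 + (N : ℝ) ≤ (1 + N) ^ 2 := fun N => by
    nlinarith [Nat.cast_nonneg (α := ℝ) N]
  -- Upper bounds for the co-complexities, uniformly of the form required by `tendsto_entSeq`.
  have hup : ∀ {K' : ℝ}, 0 < K' → ∀ N : ℕ, ENNReal.ofReal (K' * (1 + N) * growth w t Φ N) ≤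
      ENNReal.ofReal (K' * (1 + N) ^ 2 * growth w t Φ N) := fun {K'} hK' N => by
    have := (hB N).le
    gcongr
    exact hsq N
  have hlim : Tendsto (entSeq (fun N => coComplexity D w.H t ((iter Φ N).obj G))) atTop
      (nhds (L : EReal)) := by
    refine tendsto_entSeq hB hL hK₁ hK₂ (fun N => (h₁ N).trans ?_)
      (fun N => (h₂ N).trans (hup hK₂ N))
    gcongr
    exact hsq N
  refine ⟨L, hlim, Tendsto.limsup_eq ?_, le_antisymm (iSup_le ?_) ?_⟩
  · refine tendsto_entSeq hB hL (mul_pos hK₁ hK₄) (add_pos_of_nonneg_of_pos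
      (mul_nonneg hK₃ hK₂.le) one_pos) (fun N => ?_) (fun N => ?_)
    · refine (h₁ N).trans ((mul_le_mul_right (h₄ N) _).trans (le_of_eq ?_))
      rw [← mul_assoc, ← ENNReal.ofReal_mul (by positivity)]
      congr 2
      ring
    · refine (h₃ _).trans ((mul_le_mul_right (h₂ N) _).trans ?_)
      rw [← ENNReal.ofReal_mul hK₃]
      refine le_trans (ENNReal.ofReal_le_ofReal ?_)
        (hup (add_pos_of_nonneg_of_pos (mul_nonneg hK₃ hK₂.le) one_pos) N)
      have : 0 ≤ (1 + (N : ℝ)) * growth w t Φ N := mul_nonneg (by positivity) (hB N).le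
      linarith
  · rintro ⟨E, -⟩
    obtain ⟨K', hK', hE'⟩ := coComplexity_iter_le (w := w) (t := t) hE hΦ E
    have hlim' : Tendsto (entSeq (fun N : ℕ =>
        ENNReal.ofReal (K' * (1 + N) ^ 2 * growth w t Φ N))) atTop (nhds (L : EReal)) := by
      refine tendsto_entSeq hB hL (inv_pos.2 hK') hK' (fun N => ?_) (fun N => le_rfl)
      rw [← ENNReal.ofReal_mul (by positivity)]
      refine ENNReal.ofReal_le_ofReal ?_
      have h1 : 1 ≤ (1 + (N : ℝ)) ^ 2 := one_le_pow₀ (by simp)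
      calc growth w t Φ N ≤ (1 + (N : ℝ)) ^ 2 * ((1 + (N : ℝ)) ^ 2 * growth w t Φ N) := by
            have := (hB N).le
            nlinarith [mul_nonneg (sub_nonneg.2 h1) this,
              mul_nonneg (sub_nonneg.2 h1) (mul_nonneg (sub_nonneg.2 h1) this)]
        _ = _ := by field_simp
    rw [← hlim'.limsup_eq]
    exact limsup_le_limsup (Eventually.of_forall
      (entSeq_mono fun N => (hE' N).trans (hup hK' N)))
  · rw [← hlim.limsup_eq]
    exact le_iSup (fun E : {X : D // X ∈ (Set.univ : Set D)} =>
      limsup (entSeq (fun N => coComplexity D w.H t ((iter Φ N).obj E.1))) atTop)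
      ⟨G, Set.mem_univ G⟩
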